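/- Let B be a finite set of nonzero generalized polynomial functions on (0,∞)². Then there exist L ∈ ℕ and real numbers 0 < γ_1 < γ_2 < … < γ_L such that, setting γ_0 = 0 and γ_{L+1} = ∞, for each a ∈ B and each p ∈ {0,1,…,L}, the zero set of a in the vertical half-strip H_p := (γ_p, γ_{p+1}) × (0,∞) is exactly the union of the graphs of finitely many continuous, monotonic, generalized semialgebraic functions ξ_{a,p,1}, …, ξ_{a,p,s(a,p)} : (γ_p, γ_{p+1}) → (0,∞) with 0 < ξ_{a,p,1}(x) < … < ξ_{a,p,s(a,p)}(x) for all x ∈ (γ_p,γ_{p+1}), where 0 ≤ s(a,p) ≤ K(a), the number of distinct y-exponents of a. Moreover, for all a_1, a_2 ∈ B, all p ≤ L, and all indices j_1 ≤ s(a_1,p), j_2 ≤ s(a_2,p), exactly one of the three relations ξ_{a_1,p,j_1} < ξ_{a_2,p,j_2}, ξ_{a_1,p,j_1} = ξ_{a_2,p,j_2}, ξ_{a_1,p,j_1} > ξ_{a_2,p,j_2} holds uniformly throughout (γ_p, γ_{p+1}). -/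

import Mathlib

open Set

noncomputable section

/-- A one-variable generalized polynomial function (on `(0,∞)`):
`x ↦ ∑ cᵢ x^{αᵢ}` with nonzero real coefficients and distinct real exponents. -/
def IsGenPoly1 (f : ℝ → ℝ) : Prop :=
  ∃ (m : ℕ) (c : Fin m → ℝ) (α : Fin m → ℝ),
    (∀ i, c i ≠ 0) ∧ Function.Injective α ∧
    ∀ x : ℝ, 0 < x → f x = ∑ i, c i * x ^ α i

/-- A generalized polynomial function of two variables (values prescribed on the
open positive quadrant): `(x,y) ↦ ∑ cᵢ x^{αᵢ₁} y^{αᵢ₂}` with nonzero real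
coefficients and distinct real exponent pairs. -/
def IsGenPoly2 (a : ℝ → ℝ → ℝ) : Prop :=
  ∃ (m : ℕ) (c : Fin m → ℝ) (α : Fin m → ℝ × ℝ),
    (∀ i, c i ≠ 0) ∧ Function.Injective α ∧
    ∀ x y : ℝ, 0 < x → 0 < y → a x y = ∑ i, c i * x ^ (α i).1 * y ^ (α i).2

/-- A basic generalized semialgebraic (semisignomial) subset of `(0,∞)²`. -/
def IsBasicGSA2 (S : Set (ℝ × ℝ)) : Prop :=
  ∃ (f : ℝ → ℝ → ℝ) (K : ℕ) (g : Fin K → ℝ → ℝ → ℝ),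
    IsGenPoly2 f ∧ (∀ k, IsGenPoly2 (g k)) ∧
    S = {q : ℝ × ℝ | 0 < q.1 ∧ 0 < q.2 ∧ f q.1 q.2 = 0 ∧ ∀ k, 0 < g k q.1 q.2}

/-- A generalized semialgebraic subset of `(0,∞)²`: a finite union of basic ones. -/
def IsGSA2 (S : Set (ℝ × ℝ)) : Prop :=
  ∃ (J : ℕ) (T : Fin J → Set (ℝ × ℝ)), (∀ j, IsBasicGSA2 (T j)) ∧ S = ⋃ j, T j

/-- The `p`-th interval of the subdivision `0 = γ 0 < γ 1 < … < γ L < γ (L+1) = ∞`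
of `(0,∞)`: it is `(γ p, γ (p+1))` for `p < L` and `(γ L, ∞)` for `p = L`. -/
def vstrip (γ : ℕ → ℝ) (L p : ℕ) : Set ℝ :=
  if p = L then Set.Ioi (γ p) else Set.Ioo (γ p) (γ (p + 1))


open Filter Topology

abbrev GB := AddMonoidAlgebra ℝ ℝ
abbrev GA := AddMonoidAlgebra GB ℝ

def expHom (u : ℝ) : Multiplicative ℝ →* ℝ where
  toFun a := Real.exp (a.toAdd * u)
  map_one' := by simp
  map_mul' a b := by simp [add_mul, Real.exp_add]

def evB (u : ℝ) : GB →+* ℝ :=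
  AddMonoidAlgebra.liftNCRingHom (RingHom.id ℝ) (expHom u) (fun _ _ => Commute.all _ _)

def ev (u v : ℝ) : GA →+* ℝ :=
  AddMonoidAlgebra.liftNCRingHom (evB u) (expHom v) (fun _ _ => Commute.all _ _)

lemma evB_single (u α c : ℝ) : evB u (AddMonoidAlgebra.single α c) = c * Real.exp (α * u) := by
  simp [evB, expHom]

lemma ev_single (u v β : ℝ) (b : GB) :
    ev u v (AddMonoidAlgebra.single β b) = evB u b * Real.exp (β * v) := by
  simp [ev, expHom]

lemma GB_sum (b : GB) : b = ∑ α ∈ b.coeff.support, AddMonoidAlgebra.single α (b.coeff α) :=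
  (AddMonoidAlgebra.sum_coeff_single b).symm

lemma GA_sum (b : GA) : b = ∑ α ∈ b.coeff.support, AddMonoidAlgebra.single α (b.coeff α) :=
  (AddMonoidAlgebra.sum_coeff_single b).symm

lemma evB_eq_sum (u : ℝ) (b : GB) :
    evB u b = ∑ α ∈ b.coeff.support, b.coeff α * Real.exp (α * u) := by
  conv_lhs => rw [GB_sum b, map_sum]
  simp [evB_single]

lemma ev_eq_sum (u v : ℝ) (b : GA) :
    ev u v b = ∑ α ∈ b.coeff.support, evB u (b.coeff α) * Real.exp (α * v) := by
  conv_lhs => rw [GA_sum b, map_sum]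
  simp [ev_single]

lemma evB_smul (u c : ℝ) (b : GB) : evB u (c • b) = c * evB u b := by
  have : c • b = AddMonoidAlgebra.single 0 c * b := by
    ext a; simp
  rw [this, map_mul, evB_single]; simp

/-- subring of elements with y-exponents in `M` -/
def RM (M : AddSubmonoid ℝ) : Subring GA where
  carrier := {P | ∀ β, P.coeff β ≠ 0 → β ∈ M}
  zero_mem' := by intro β h; simp at h
  one_mem' := by
    intro β h
    rw [AddMonoidAlgebra.one_def, AddMonoidAlgebra.coeff_single, Finsupp.single_apply] at h
    split_ifs at h with h0
    · rw [← h0]; exact M.zero_mem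
    · simp at h
  add_mem' := by
    intro a b ha hb β h
    by_contra hM
    have h1 : a.coeff β = 0 := by by_contra h1; exact hM (ha β h1)
    have h2 : b.coeff β = 0 := by by_contra h1; exact hM (hb β h1)
    exact h (by simp [h1, h2])
  neg_mem' := by
    intro a ha β h
    exact ha β (by simpa using h)
  mul_mem' := by
    intro a b ha hb β h
    classical
    rw [AddMonoidAlgebra.coeff_mul] at h
    obtain ⟨i, hi, h⟩ := Finset.exists_ne_zero_of_sum_ne_zero h
    obtain ⟨j, hj, h⟩ := Finset.exists_ne_zero_of_sum_ne_zero h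
    beta_reduce at h
    split_ifs at h with h0
    · rw [← h0]
      exact M.add_mem (ha i (by simpa using hi)) (hb j (by simpa using hj))
    · simp at h

lemma mem_RM {M : AddSubmonoid ℝ} {P : GA} : P ∈ RM M ↔ ∀ β, P.coeff β ≠ 0 → β ∈ M := Iff.rfl

lemma single_mem_RM {M : AddSubmonoid ℝ} {β : ℝ} (hβ : β ∈ M) (b : GB) :
    (AddMonoidAlgebra.single β b : GA) ∈ RM M := by
  intro γ h
  rw [AddMonoidAlgebra.coeff_single, Finsupp.single_apply] at h
  split_ifs at h with h0
  · rw [← h0]; exact hβ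
  · simp at h

/-- `∂_v - γ` -/
def DD (γ : ℝ) (P : GA) : GA :=
  ∑ β ∈ P.coeff.support, AddMonoidAlgebra.single β ((β - γ) • P.coeff β)

lemma DD_coeff (γ : ℝ) (P : GA) (β : ℝ) : (DD γ P).coeff β = (β - γ) • P.coeff β := by
  classical
  simp only [DD, AddMonoidAlgebra.coeff_sum, AddMonoidAlgebra.coeff_single, Finsupp.finsetSum_apply,
    Finsupp.single_apply]
  rw [Finset.sum_ite_eq']
  split_ifs with h
  · rfl
  · have : P.coeff β = 0 := by simpa using h
    simp [this]

lemma DD_mem {M : AddSubmonoid ℝ} {P : GA} (γ : ℝ) (h : P ∈ RM M) : DD γ P ∈ RM M := by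
  intro β hβ
  rw [DD_coeff] at hβ
  exact h β (fun h0 => hβ (by simp [h0]))

lemma DD_support (γ : ℝ) (P : GA) : (DD γ P).coeff.support = P.coeff.support.erase γ := by
  ext β
  simp [DD_coeff, sub_eq_zero]

lemma ev_DD (γ u v : ℝ) (P : GA) : ev u v (DD γ P) = ev u v (DD 0 P) - γ * ev u v P := by
  rw [DD, DD, map_sum, map_sum, ev_eq_sum u v P, Finset.mul_sum, ← Finset.sum_sub_distrib]
  refine Finset.sum_congr rfl fun β _ => ?_
  rw [ev_single, ev_single, evB_smul, evB_smul]; ring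

lemma hasDerivAt_v (P : GA) (u v : ℝ) :
    HasDerivAt (fun v => ev u v P) (ev u v (DD 0 P)) v := by
  have : (fun v => ev u v P) =
      fun v => ∑ β ∈ P.coeff.support, evB u (P.coeff β) * Real.exp (β * v) := by
    funext v; exact ev_eq_sum u v P
  rw [this, DD, map_sum]
  refine HasDerivAt.fun_sum fun β _ => ?_
  rw [ev_single, evB_smul]
  have h1 : HasDerivAt (fun v : ℝ => β * v) β v := by simpa using (hasDerivAt_id v).const_mul β
  refine ((h1.exp).const_mul (evB u (P.coeff β))).congr_deriv ?_
  ring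

def dB (b : GB) : GB := ∑ α ∈ b.coeff.support, AddMonoidAlgebra.single α (α * b.coeff α)

lemma hasDerivAt_B (b : GB) (u : ℝ) : HasDerivAt (fun u => evB u b) (evB u (dB b)) u := by
  have : (fun u => evB u b) = fun u => ∑ α ∈ b.coeff.support, b.coeff α * Real.exp (α * u) := by
    funext v; exact evB_eq_sum v b
  rw [this, dB, map_sum]
  refine HasDerivAt.fun_sum fun β _ => ?_
  rw [evB_single]
  have h1 : HasDerivAt (fun v : ℝ => β * v) β u := by simpa using (hasDerivAt_id u).const_mul β
  refine ((h1.exp).const_mul (b.coeff β)).congr_deriv ?_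
  ring

def DU (P : GA) : GA := ∑ β ∈ P.coeff.support, AddMonoidAlgebra.single β (dB (P.coeff β))

lemma DU_mem {M : AddSubmonoid ℝ} {P : GA} (h : P ∈ RM M) : DU P ∈ RM M :=
  Subring.sum_mem _ fun β hβ => single_mem_RM (h β (by simpa using hβ)) _

lemma hasDerivAt_u (P : GA) (u v : ℝ) :
    HasDerivAt (fun u => ev u v P) (ev u v (DU P)) u := by
  have : (fun u => ev u v P) =
      fun u => ∑ β ∈ P.coeff.support, evB u (P.coeff β) * Real.exp (β * v) := by
    funext u; exact ev_eq_sum u v P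
  rw [this, DU, map_sum]
  refine HasDerivAt.fun_sum fun β _ => ?_
  rw [ev_single]
  exact (hasDerivAt_B _ u).mul_const _

lemma contDiff_ev (P : GA) : ContDiff ℝ 1 (fun p : ℝ × ℝ => ev p.1 p.2 P) := by
  have : (fun p : ℝ × ℝ => ev p.1 p.2 P) =
      fun p => ∑ β ∈ P.coeff.support,
        (∑ α ∈ (P.coeff β).coeff.support, (P.coeff β).coeff α * Real.exp (α * p.1))
          * Real.exp (β * p.2) := by
    funext p; rw [ev_eq_sum]; simp only [evB_eq_sum]
  rw [this]
  fun_prop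

lemma continuous_ev (P : GA) : Continuous (fun p : ℝ × ℝ => ev p.1 p.2 P) :=
  (contDiff_ev P).continuous

lemma strict_ev (P : GA) (p : ℝ × ℝ) :
    HasStrictFDerivAt (fun p : ℝ × ℝ => ev p.1 p.2 P)
      (fderiv ℝ (fun p : ℝ × ℝ => ev p.1 p.2 P) p) p :=
  (contDiff_ev P).contDiffAt.hasStrictFDerivAt (by simp)

lemma fderiv_ev (P : GA) (u v : ℝ) (a b : ℝ) :
    fderiv ℝ (fun p : ℝ × ℝ => ev p.1 p.2 P) (u, v) (a, b)
      = a * ev u v (DU P) + b * ev u v (DD 0 P) := by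
  have h := (strict_ev P (u, v)).hasFDerivAt
  have h1 : HasDerivAt (fun t : ℝ => ((t, v) : ℝ × ℝ)) ((1, 0) : ℝ × ℝ) u :=
    (hasDerivAt_id u).prodMk (hasDerivAt_const u v)
  have h2 : HasDerivAt (fun t : ℝ => ((u, t) : ℝ × ℝ)) ((0, 1) : ℝ × ℝ) v :=
    (hasDerivAt_const v u).prodMk (hasDerivAt_id v)
  have e1 := (HasFDerivAt.comp_hasDerivAt (x := u) (f := fun t : ℝ => ((t, v) : ℝ × ℝ)) h h1).unique
    (hasDerivAt_u P u v)
  have e2 := (HasFDerivAt.comp_hasDerivAt (x := v) (f := fun t : ℝ => ((u, t) : ℝ × ℝ)) h h2).unique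
    (hasDerivAt_v P u v)
  have : ((a, b) : ℝ × ℝ) = a • ((1, 0) : ℝ × ℝ) + b • ((0, 1) : ℝ × ℝ) := by simp
  rw [this, map_add, map_smul, map_smul, e1, e2]; simp

lemma chain_ev (P : GA) {ξ : ℝ → ℝ} {d u : ℝ} (h : HasDerivAt ξ d u) :
    HasDerivAt (fun u => ev u (ξ u) P)
      (ev u (ξ u) (DU P) + d * ev u (ξ u) (DD 0 P)) u := by
  have h1 : HasDerivAt (fun t : ℝ => ((t, ξ t) : ℝ × ℝ)) ((1, d) : ℝ × ℝ) u :=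
    (hasDerivAt_id u).prodMk h
  have := HasFDerivAt.comp_hasDerivAt (x := u) (f := fun t : ℝ => ((t, ξ t) : ℝ × ℝ))
    (strict_ev P (u, ξ u)).hasFDerivAt h1
  rw [fderiv_ev, one_mul] at this
  exact this

lemma ift (P : GA) (u0 v0 : ℝ) (h0 : ev u0 v0 P = 0) (hv : ev u0 v0 (DD 0 P) ≠ 0) :
    ∃ ψ : ℝ → ℝ, ψ u0 = v0 ∧ (∃ d, HasDerivAt ψ d u0) ∧
      (∀ᶠ p : ℝ × ℝ in 𝓝 (u0, v0), (ev p.1 p.2 P = 0 ↔ ψ p.1 = p.2)) ∧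
      (∀ᶠ u in 𝓝 u0, ev u (ψ u) P = 0) := by
  have h := strict_ev P (u0, v0)
  have hinv : (fderiv ℝ (fun p : ℝ × ℝ => ev p.1 p.2 P) (u0, v0) ∘L
      ContinuousLinearMap.inr ℝ ℝ ℝ).IsInvertible := by
    refine ⟨ContinuousLinearEquiv.unitsEquivAut ℝ (Units.mk0 _ hv), ?_⟩
    ext
    simp [fderiv_ev]
  have e1 := h.eventually_apply_eq_iff_implicitFunctionOfProdDomain hinv
  have e2 := h.eventually_apply_implicitFunctionOfProdDomain hinv
  have e3 := h.hasStrictFDerivAt_implicitFunctionOfProdDomain hinv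
  simp only [h0] at e1 e2
  refine ⟨h.implicitFunctionOfProdDomain hinv, ?_, ⟨_, e3.hasFDerivAt.hasDerivAt⟩, e1, e2⟩
  exact e1.self_of_nhds.mp h0

structure EndF (l : Filter ℝ) : Prop where
  neBot : l.NeBot
  basis : ∀ s ∈ l, ∃ I ∈ l, I ⊆ s ∧ IsOpen I ∧ OrdConnected I
  side : ∀ z, Iio z ∈ l ∨ Ioi z ∈ l

lemma EndF.ev {l : Filter ℝ} (hl : EndF l) {p : ℝ → Prop} (h : ∀ᶠ u in l, p u) :
    ∃ I ∈ l, IsOpen I ∧ OrdConnected I ∧ I.Nonempty ∧ ∀ u ∈ I, p u := by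
  obtain ⟨I, h1, h2, h3, h4⟩ := hl.basis _ h
  have := hl.neBot
  exact ⟨I, h1, h3, h4, Filter.nonempty_of_mem h1, h2⟩

lemma EndF.nhds {l : Filter ℝ} (hl : EndF l) {p : ℝ → Prop} (h : ∀ᶠ u in l, p u) :
    ∀ᶠ u in l, ∀ᶠ w in 𝓝 u, p w := by
  obtain ⟨I, h1, h2, h3, h4, h5⟩ := hl.ev h
  filter_upwards [h1] with u hu
  filter_upwards [h2.mem_nhds hu] with w hw using h5 w hw

lemma EndF.ne {l : Filter ℝ} (hl : EndF l) (z : ℝ) : ∀ᶠ u in l, u ≠ z := by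
  rcases hl.side z with h | h
  · filter_upwards [h] with u hu using ne_of_lt hu
  · filter_upwards [h] with u hu using ne_of_gt hu

def CS (l : Filter ℝ) (f : ℝ → ℝ) : Prop := ∃ σ : SignType, ∀ᶠ u in l, SignType.sign (f u) = σ

lemma CS.congr {l : Filter ℝ} {f g : ℝ → ℝ} (h : CS l f) (hfg : ∀ᶠ u in l, f u = g u) : CS l g := by
  obtain ⟨σ, h⟩ := h
  exact ⟨σ, by filter_upwards [h, hfg] with u h1 h2; rw [← h2, h1]⟩

lemma CS.mul {l : Filter ℝ} {f g : ℝ → ℝ} (hf : CS l f) (hg : CS l g) :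
    CS l (fun u => f u * g u) := by
  obtain ⟨σ, h⟩ := hf
  obtain ⟨τ, h'⟩ := hg
  exact ⟨σ * τ, by filter_upwards [h, h'] with u h1 h2; rw [sign_mul, h1, h2]⟩

lemma CS.neg {l : Filter ℝ} {f : ℝ → ℝ} (hf : CS l f) : CS l (fun u => - f u) := by
  obtain ⟨σ, h⟩ := hf
  exact ⟨-σ, by filter_upwards [h] with u h1; rw [Left.sign_neg, h1]⟩

lemma CS.dich {l : Filter ℝ} {f : ℝ → ℝ} (hf : CS l f) :
    (∀ᶠ u in l, f u = 0) ∨ (∀ᶠ u in l, f u ≠ 0) := by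
  obtain ⟨σ, h⟩ := hf
  by_cases hσ : σ = 0
  · left; filter_upwards [h] with u hu; rwa [hσ, sign_eq_zero_iff] at hu
  · right; filter_upwards [h] with u hu h0; rw [h0, sign_zero] at hu; exact hσ hu.symm

lemma CS.of_freq {l : Filter ℝ} {f : ℝ → ℝ} (hf : CS l f) (h : ∃ᶠ u in l, f u = 0) :
    ∀ᶠ u in l, f u = 0 := by
  rcases hf.dich with h1 | h1
  · exact h1
  · exact absurd h1 h

lemma CS_zero {l : Filter ℝ} {f : ℝ → ℝ} (h : ∀ᶠ u in l, f u = 0) : CS l f :=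
  ⟨0, by filter_upwards [h] with u hu; simp [hu]⟩

/-- sign is constant on an interval for a nonvanishing continuous function -/
lemma sign_const_of_cont {I : Set ℝ} (hI : OrdConnected I) {f : ℝ → ℝ} (hc : ContinuousOn f I)
    (h0 : ∀ u ∈ I, f u ≠ 0) {a b : ℝ} (ha : a ∈ I) (hb : b ∈ I) :
    SignType.sign (f a) = SignType.sign (f b) := by
  have hp : IsPreconnected (f '' I) := (hI.isPreconnected).image f hc
  have ho := hp.ordConnected
  rcases lt_or_gt_of_ne (h0 a ha) with h1 | h1 <;> rcases lt_or_gt_of_ne (h0 b hb) with h2 | h2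
  · rw [sign_neg h1, sign_neg h2]
  · obtain ⟨c, hc, h⟩ := ho.out (mem_image_of_mem f ha) (mem_image_of_mem f hb) ⟨h1.le, h2.le⟩
    exact absurd h (h0 c hc)
  · obtain ⟨c, hc, h⟩ := ho.out (mem_image_of_mem f hb) (mem_image_of_mem f ha) ⟨h2.le, h1.le⟩
    exact absurd h (h0 c hc)
  · rw [sign_pos h1, sign_pos h2]

lemma CS_of_cont {l : Filter ℝ} (hl : EndF l) {f : ℝ → ℝ} (hc : ∀ᶠ u in l, ContinuousAt f u)
    (h0 : ∀ᶠ u in l, f u ≠ 0) : CS l f := by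
  obtain ⟨I, hI, _, h3, ⟨a, ha⟩, h⟩ := hl.ev (hc.and h0)
  refine ⟨SignType.sign (f a), ?_⟩
  filter_upwards [hI] with u hu
  exact sign_const_of_cont h3 (fun x hx => (h x hx).1.continuousWithinAt) (fun x hx => (h x hx).2) hu ha

lemma EndF.upper {l : Filter ℝ} (hl : EndF l) {I : Set ℝ} (hI : I ∈ l) {p : ℝ → Prop}
    (hp : ∀ x ∈ I, ∀ y ∈ I, x ≤ y → p x → p y) :
    (∀ᶠ u in l, p u) ∨ (∀ᶠ u in l, ¬ p u) := by
  by_cases h : ∃ z ∈ I, p z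
  swap
  · right
    filter_upwards [hI] with u hu hpu using h ⟨u, hu, hpu⟩
  obtain ⟨z, hz, hpz⟩ := h
  by_cases h' : ∃ z' ∈ I, ¬ p z'
  swap
  · left
    push Not at h'
    filter_upwards [hI] with u hu using h' u hu
  obtain ⟨z', hz', hpz'⟩ := h'
  let F := {x | x ∈ I ∧ ¬ p x}
  have hb : BddAbove F := ⟨z, fun x hx => by
    by_contra hlt
    exact hx.2 (hp z hz x hx.1 (le_of_lt (not_le.mp hlt)) hpz)⟩
  rcases hl.side (sSup F) with h1 | h1
  · right
    filter_upwards [h1, hI] with u hu huI hpu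
    obtain ⟨x, hx, hux⟩ := exists_lt_of_lt_csSup (show F.Nonempty from ⟨z', hz', hpz'⟩) hu
    exact hx.2 (hp u huI x hx.1 hux.le hpu)
  · left
    filter_upwards [h1, hI] with u hu huI
    by_contra hpu
    exact absurd (le_csSup hb (show u ∈ F from ⟨huI, hpu⟩)) (not_le.mpr hu)

lemma CS_of_mono {l : Filter ℝ} (hl : EndF l) {f : ℝ → ℝ} {I : Set ℝ} (hI : I ∈ l)
    (hf : MonotoneOn f I) : CS l f := by
  rcases hl.upper hI (p := fun u => 0 < f u)
    (fun x hx y hy hxy h => lt_of_lt_of_le h (hf hx hy hxy)) with h1 | h1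
  · exact ⟨1, by filter_upwards [h1] with u hu using sign_pos hu⟩
  rcases hl.upper hI (p := fun u => 0 ≤ f u)
    (fun x hx y hy hxy h => le_trans h (hf hx hy hxy)) with h2 | h2
  · exact ⟨0, by filter_upwards [h1, h2] with u hu hu2; rw [sign_eq_zero_iff]; linarith⟩
  · exact ⟨-1, by filter_upwards [h2] with u hu using sign_neg (not_le.mp hu)⟩

lemma mono_of_deriv {I : Set ℝ} (ho : IsOpen I) (hc : OrdConnected I) {f D : ℝ → ℝ}
    (hd : ∀ u ∈ I, HasDerivAt f (D u) u) (h : ∀ u ∈ I, 0 ≤ D u) : MonotoneOn f I := by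
  refine monotoneOn_of_deriv_nonneg hc.convex
    (fun x hx => (hd x hx).continuousAt.continuousWithinAt) ?_ ?_
  · rw [ho.interior_eq]
    exact fun x hx => (hd x hx).differentiableAt.differentiableWithinAt
  · rw [ho.interior_eq]
    intro x hx
    rw [(hd x hx).deriv]; exact h x hx

lemma anti_of_deriv {I : Set ℝ} (ho : IsOpen I) (hc : OrdConnected I) {f D : ℝ → ℝ}
    (hd : ∀ u ∈ I, HasDerivAt f (D u) u) (h : ∀ u ∈ I, D u ≤ 0) : AntitoneOn f I := by
  have := mono_of_deriv ho hc (f := fun u => - f u) (D := fun u => - D u)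
    (fun u hu => (hd u hu).neg) (fun u hu => by linarith [h u hu])
  intro x hx y hy hxy
  linarith [this hx hy hxy]

lemma CS_of_deriv {l : Filter ℝ} (hl : EndF l) {f D : ℝ → ℝ}
    (hd : ∀ᶠ u in l, HasDerivAt f (D u) u) (hD : CS l D) : CS l f := by
  obtain ⟨σ, hσ⟩ := hD
  obtain ⟨I, hI, ho, hc, _, h⟩ := hl.ev (hd.and hσ)
  by_cases hs : 0 ≤ σ
  · refine CS_of_mono hl hI (mono_of_deriv ho hc (fun u hu => (h u hu).1) fun u hu => ?_)
    rw [← (h u hu).2, sign_nonneg_iff] at hs; exact hs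
  · have := anti_of_deriv ho hc (fun u hu => (h u hu).1) fun u hu => ?_
    · have h2 : CS l (fun u => - f u) := CS_of_mono hl hI
        (fun x hx y hy hxy => neg_le_neg (this hx hy hxy))
      simpa using h2.neg
    · have hs' : σ ≤ 0 := le_of_lt (not_le.mp hs)
      rw [← (h u hu).2, sign_nonpos_iff] at hs'; exact hs'

/-- exponential sums have few zeros -/
lemma expsum_card : ∀ (n : ℕ) (s : Finset ℝ) (c : ℝ → ℝ), s.card = n → s.Nonempty →
    (∀ β ∈ s, c β ≠ 0) → ∀ Z : Finset ℝ,
    (∀ z ∈ Z, ∑ β ∈ s, c β * Real.exp (β * z) = 0) → Z.card < s.card := by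
  intro n
  induction n with
  | zero => intro s c h hs; simp_all
  | succ n ih =>
    intro s c hcard hs hc Z hZ
    obtain ⟨β0, hβ0⟩ := hs
    have hc1 : (s.erase β0).card = n := by rw [Finset.card_erase_of_mem hβ0, hcard]; rfl
    rcases (s.erase β0).eq_empty_or_nonempty with he | he
    · have hs1 : s = {β0} := by
        rw [← Finset.insert_erase hβ0, he]; rfl
      have : Z = ∅ := by
        by_contra hne
        obtain ⟨z, hz⟩ := Finset.nonempty_iff_ne_empty.mpr hne
        have := hZ z hz
        rw [hs1, Finset.sum_singleton] at this
        exact (mul_ne_zero (hc β0 hβ0) (Real.exp_ne_zero _)) this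
      rw [this, hs1]; simp
    · have ih' := ih (s.erase β0) (fun β => (β - β0) * c β) hc1 he (by
        intro β hβ
        rw [Finset.mem_erase] at hβ
        exact mul_ne_zero (sub_ne_zero.mpr hβ.1) (hc β hβ.2))
      set g : ℝ → ℝ := fun z => ∑ β ∈ s.erase β0, (β - β0) * c β * Real.exp (β * z) with hg
      have hfin : {z | g z = 0}.Finite := by
        by_contra hinf
        obtain ⟨T, hT, hTc⟩ := Set.Infinite.exists_subset_card_eq hinf ((s.erase β0).card)
        have := ih' T (fun z hz => hT hz)
        omega
      let T := hfin.toFinset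
      have hTc := ih' T (fun z hz => by simpa [T] using hz)
      have : Z.card ≤ T.card + 1 := by
        refine Finset.card_le_of_interleaved fun x hx y hy hxy _ => ?_
        have hd : ∀ z, HasDerivAt
            (fun z => ∑ β ∈ s, c β * Real.exp ((β - β0) * z)) (Real.exp (-β0 * z) * g z) z := by
          intro z
          have : Real.exp (-β0 * z) * g z
              = ∑ β ∈ s, c β * (Real.exp ((β - β0) * z) * (β - β0)) := by
            rw [hg]
            rw [← Finset.add_sum_erase s _ hβ0]
            simp only [sub_self, mul_zero, zero_add]
            rw [Finset.mul_sum]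
            refine Finset.sum_congr rfl fun β _ => ?_
            rw [show (β - β0) * z = -β0 * z + β * z by ring, Real.exp_add]; ring
          rw [this]
          refine HasDerivAt.fun_sum fun β _ => ?_
          have h1 : HasDerivAt (fun v : ℝ => (β - β0) * v) (β - β0) z := by
            simpa using (hasDerivAt_id z).const_mul (β - β0)
          exact (h1.exp).const_mul _
        have hz : ∀ z ∈ Z, ∑ β ∈ s, c β * Real.exp ((β - β0) * z) = 0 := by
          intro z hz
          have : ∑ β ∈ s, c β * Real.exp ((β - β0) * z)
              = Real.exp (-β0 * z) * ∑ β ∈ s, c β * Real.exp (β * z) := by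
            rw [Finset.mul_sum]
            refine Finset.sum_congr rfl fun β _ => ?_
            rw [show (β - β0) * z = -β0 * z + β * z by ring, Real.exp_add]; ring
          rw [this, hZ z hz, mul_zero]
        obtain ⟨w, hw, h⟩ := exists_hasDerivAt_eq_zero hxy
          (fun z _ => (hd z).continuousAt.continuousWithinAt)
          (by rw [hz x hx, hz y hy]) (fun z _ => hd z)
        refine ⟨w, ?_, hw.1, hw.2⟩
        have := (mul_eq_zero.mp h).resolve_left (Real.exp_ne_zero _)
        simpa [T] using this
      rw [hc1] at hTc
      omega

lemma support_nonempty {P : GA} (h : P ≠ 0) : P.coeff.support.Nonempty := by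
  rw [Finsupp.support_nonempty_iff]
  simpa using h

lemma evB_ne {l : Filter ℝ} (hl : EndF l) {b : GB} (hb : b ≠ 0) : ∀ᶠ u in l, evB u b ≠ 0 := by
  have hs : b.coeff.support.Nonempty := by
    rw [Finsupp.support_nonempty_iff]; simpa using hb
  have hfin : {z | evB z b = 0}.Finite := by
    by_contra hinf
    obtain ⟨T, hT, hTc⟩ := Set.Infinite.exists_subset_card_eq hinf (b.coeff.support.card)
    have := expsum_card _ b.coeff.support b.coeff rfl hs (by intro β; simp) T (fun z hz => by
      have := hT hz
      simp only [mem_ofPred_eq, evB_eq_sum] at this; exact this)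
    omega
  have := (hfin.toFinset.eventually_all (l := l) (p := fun z u => u ≠ z)).mpr (fun z _ => hl.ne z)
  filter_upwards [this] with u hu h0
  exact hu u (by simpa using h0) rfl

def Reg (P : GA) (u : ℝ) : Prop := ∀ β ∈ P.coeff.support, evB u (P.coeff β) ≠ 0

lemma reg_ev {l : Filter ℝ} (hl : EndF l) (P : GA) : ∀ᶠ u in l, Reg P u := by
  refine (Finset.eventually_all (l := l) _).mpr fun β hβ => ?_
  exact evB_ne hl (by simpa using hβ)

lemma zeros_card {P : GA} (hP : P ≠ 0) {u : ℝ} (hu : Reg P u) (Z : Finset ℝ)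
    (hZ : ∀ z ∈ Z, ev u z P = 0) : Z.card < P.coeff.support.card :=
  expsum_card _ P.coeff.support (fun β => evB u (P.coeff β)) rfl (support_nonempty hP) hu Z
    (fun z hz => by rw [← ev_eq_sum]; exact hZ z hz)

lemma zeros_finite {P : GA} (hP : P ≠ 0) {u : ℝ} (hu : Reg P u) : {v | ev u v P = 0}.Finite := by
  by_contra hinf
  obtain ⟨T, hT, hTc⟩ := Set.Infinite.exists_subset_card_eq hinf (P.coeff.support.card)
  have := zeros_card hP hu T (fun z hz => hT hz)
  omega

lemma Reg.DD {P : GA} {u : ℝ} (h : Reg P u) (γ : ℝ) : Reg (DD γ P) u := by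
  intro β hβ
  rw [DD_support, Finset.mem_erase] at hβ
  rw [DD_coeff, evB_smul]
  exact mul_ne_zero (sub_ne_zero.mpr hβ.1) (h β hβ.2)

lemma hasDerivAt_twist (P : GA) (γ u v : ℝ) :
    HasDerivAt (fun v => Real.exp (-γ * v) * ev u v P) (Real.exp (-γ * v) * ev u v (DD γ P)) v := by
  have h1 : HasDerivAt (fun v : ℝ => -γ * v) (-γ) v := by
    simpa using (hasDerivAt_id v).const_mul (-γ)
  refine (h1.exp.mul (hasDerivAt_v P u v)).congr_deriv ?_
  rw [ev_DD γ]; ring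

lemma rolle (P : GA) (γ u : ℝ) {v w : ℝ} (hvw : v < w) (hv : ev u v P = 0) (hw : ev u w P = 0) :
    ∃ t ∈ Ioo v w, ev u t (DD γ P) = 0 := by
  obtain ⟨t, ht, h⟩ := exists_hasDerivAt_eq_zero hvw
    (fun z _ => (hasDerivAt_twist P γ u z).continuousAt.continuousWithinAt)
    (by simp [hv, hw]) (fun z _ => hasDerivAt_twist P γ u z)
  exact ⟨t, ht, (mul_eq_zero.mp h).resolve_left (Real.exp_ne_zero _)⟩

lemma sign_twist (P : GA) (γ u v : ℝ) :
    SignType.sign (Real.exp (-γ * v) * ev u v P) = SignType.sign (ev u v P) := by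
  rw [sign_mul, sign_pos (Real.exp_pos _), one_mul]

lemma thom_aux : ∀ (n : ℕ) (P : GA), P.coeff.support.card = n →
    ∃ 𝒬 : Finset GA, ∀ u, Reg P u → ∀ v w, v ≤ w →
      (∀ Q ∈ 𝒬, SignType.sign (ev u v Q) = SignType.sign (ev u w Q)) →
      ∀ t ∈ Icc v w, SignType.sign (ev u t P) = SignType.sign (ev u v P) := by
  classical
  intro n
  induction n with
  | zero =>
    intro P hP
    have : P = 0 := by simpa using hP
    subst this
    exact ⟨∅, by simp⟩
  | succ n ih =>
    intro P hP
    obtain ⟨γ, hγ⟩ : P.coeff.support.Nonempty := Finset.card_pos.mp (by omega)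
    obtain ⟨𝒬, h𝒬⟩ := ih (DD γ P) (by rw [DD_support, Finset.card_erase_of_mem hγ, hP]; rfl)
    refine ⟨insert P 𝒬, fun u hu v w hvw hs t ht => ?_⟩
    have h1 := h𝒬 u (hu.DD γ) v w hvw (fun Q hQ => hs Q (Finset.mem_insert_of_mem hQ))
    have h2 := hs P (Finset.mem_insert_self _ _)
    rw [← sign_twist P γ u t, ← sign_twist P γ u v]
    rw [← sign_twist P γ u v, ← sign_twist P γ u w] at h2
    set f : ℝ → ℝ := fun v => Real.exp (-γ * v) * ev u v P with hf
    have hd : ∀ z, HasDerivAt f (Real.exp (-γ * z) * ev u z (DD γ P)) z :=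
      hasDerivAt_twist P γ u
    change SignType.sign (f t) = SignType.sign (f v)
    change SignType.sign (f v) = SignType.sign (f w) at h2
    have hsq : (f v ≤ f t ∧ f t ≤ f w) ∨ (f w ≤ f t ∧ f t ≤ f v) := by
      by_cases hpos : 0 ≤ ev u v (DD γ P)
      · left
        have hm : MonotoneOn f (Icc v w) := by
          refine monotoneOn_of_deriv_nonneg (convex_Icc v w)
            (fun x _ => (hd x).continuousAt.continuousWithinAt)
            (fun x _ => (hd x).differentiableAt.differentiableWithinAt) ?_
          intro x hx
          rw [(hd x).deriv]
          have := h1 x (interior_subset hx)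
          rw [← sign_nonneg_iff, ← this, sign_nonneg_iff] at hpos
          positivity
        exact ⟨hm ⟨le_rfl, hvw⟩ ht ht.1, hm ht ⟨hvw, le_rfl⟩ ht.2⟩
      · right
        have hneg : ev u v (DD γ P) ≤ 0 := (not_le.mp hpos).le
        have hm : AntitoneOn f (Icc v w) := by
          refine antitoneOn_of_deriv_nonpos (convex_Icc v w)
            (fun x _ => (hd x).continuousAt.continuousWithinAt)
            (fun x _ => (hd x).differentiableAt.differentiableWithinAt) ?_
          intro x hx
          rw [(hd x).deriv]
          have := h1 x (interior_subset hx)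
          rw [← sign_nonpos_iff, ← this, sign_nonpos_iff] at hneg
          exact mul_nonpos_of_nonneg_of_nonpos (Real.exp_pos _).le hneg
        exact ⟨hm ht ⟨hvw, le_rfl⟩ ht.2, hm ⟨le_rfl, hvw⟩ ht ht.1⟩
    rcases hsq with h | h
    · apply le_antisymm
      · rw [h2]; exact SignType.sign.monotone h.2
      · exact SignType.sign.monotone h.1
    · apply le_antisymm
      · exact SignType.sign.monotone h.2
      · rw [h2]; exact SignType.sign.monotone h.1

lemma thom (P : GA) (hP : P ≠ 0) :
    ∃ 𝒬 : Finset GA, ∀ u, Reg P u → ∀ v w, ev u v P = 0 → ev u w P = 0 →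
      (∀ Q ∈ 𝒬, SignType.sign (ev u v Q) = SignType.sign (ev u w Q)) → v = w := by
  obtain ⟨𝒬, h⟩ := thom_aux _ P rfl
  refine ⟨𝒬, fun u hu => ?_⟩
  have key : ∀ v w, v < w → ev u v P = 0 →
      (∀ Q ∈ 𝒬, SignType.sign (ev u v Q) = SignType.sign (ev u w Q)) → False := by
    intro v w hvw hv hs
    have := h u hu v w hvw.le hs
    have hinf : (Icc v w).Infinite := Icc_infinite hvw
    refine hinf ((zeros_finite hP hu).subset fun t ht => ?_)
    have := this t ht
    rwa [hv, sign_zero, sign_eq_zero_iff] at this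
  intro v w hv hw hs
  rcases lt_trichotomy v w with h1 | h1 | h1
  · exact (key v w h1 hv hs).elim
  · exact h1
  · exact (key w v h1 hw (fun Q hQ => (hs Q hQ).symm)).elim

def Nice (l : Filter ℝ) (ξ : ℝ → ℝ) : Prop :=
  (∃ D : ℝ → ℝ, (∀ᶠ u in l, HasDerivAt ξ (D u) u) ∧ CS l D) ∧
    ∀ Q : GA, CS l (fun u => ev u (ξ u) Q)

lemma Nice.congr {l : Filter ℝ} (hl : EndF l) {ξ η : ℝ → ℝ} (h : Nice l ξ)
    (he : ∀ᶠ u in l, ξ u = η u) : Nice l η := by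
  obtain ⟨⟨D, h1, h2⟩, h3⟩ := h
  refine ⟨⟨D, ?_, h2⟩, fun Q => (h3 Q).congr ?_⟩
  · filter_upwards [h1, hl.nhds he] with u hu hu'
    exact hu.congr_of_eventuallyEq (hu'.mono fun w hw => hw.symm)
  · filter_upwards [he] with u hu
    rw [hu]

lemma Nice.cont {l : Filter ℝ} {ξ : ℝ → ℝ} (h : Nice l ξ) : ∀ᶠ u in l, ContinuousAt ξ u := by
  obtain ⟨⟨D, h1, h2⟩, h3⟩ := h
  exact h1.mono fun u hu => hu.continuousAt

lemma Nice.tri {l : Filter ℝ} (hl : EndF l) {ξ η : ℝ → ℝ} (h : Nice l ξ) (h' : Nice l η)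
    {P : GA} (hP : P ≠ 0) (e : ∀ᶠ u in l, ev u (ξ u) P = 0) (e' : ∀ᶠ u in l, ev u (η u) P = 0) :
    CS l (fun u => ξ u - η u) := by
  obtain ⟨𝒬, hQ⟩ := thom P hP
  choose σ hσ using h.2
  choose τ hτ using h'.2
  by_cases hs : ∀ Q ∈ 𝒬, σ Q = τ Q
  · have h1 : ∀ᶠ u in l, ∀ Q ∈ 𝒬, SignType.sign (ev u (ξ u) Q) = SignType.sign (ev u (η u) Q) := by
      refine (Finset.eventually_all (l := l) _).mpr fun Q hQ' => ?_
      filter_upwards [hσ Q, hτ Q] with u h1 h2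
      rw [h1, h2, hs Q hQ']
    refine CS_zero ?_
    filter_upwards [h1, e, e', reg_ev hl P] with u h1 h2 h3 h4
    rw [hQ u h4 _ _ h2 h3 h1, sub_self]
  · push Not at hs
    obtain ⟨Q, hQ', hne⟩ := hs
    refine CS_of_cont hl ?_ ?_
    · filter_upwards [h.cont, h'.cont] with u h1 h2 using h1.sub h2
    · filter_upwards [hσ Q, hτ Q] with u h1 h2 h0
      rw [sub_eq_zero] at h0
      rw [h0] at h1
      exact hne (h1.symm.trans h2)

lemma bdd_aux (s : Finset ℝ) (c : ℝ → ℝ → ℝ) (hc : ∀ i, Continuous (c i)) (e : ℝ → ℝ)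
    (i0 : ℝ) (hi0 : i0 ∈ s) (he0 : e i0 = 0) (he : ∀ i ∈ s, i ≠ i0 → 0 < e i) (u0 : ℝ)
    (h0 : c i0 u0 ≠ 0) :
    ∃ R : ℝ, ∀ᶠ u in 𝓝 u0, ∀ w : ℝ, w < -R → ∑ i ∈ s, c i u * Real.exp (e i * w) ≠ 0 := by
  have hnn : ∀ i ∈ s, 0 ≤ e i := by
    intro i hi
    by_cases h : i = i0
    · rw [h, he0]
    · exact (he i hi h).le
  have hF : Continuous (fun p : ℝ × ℝ => ∑ i ∈ s, c i p.1 * p.2 ^ (e i)) := by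
    refine continuous_finsetSum _ fun i hi => ?_
    exact ((hc i).comp continuous_fst).mul ((Real.continuous_rpow_const (hnn i hi)).comp continuous_snd)
  have hF0 : ∑ i ∈ s, c i u0 * (0:ℝ) ^ (e i) ≠ 0 := by
    rw [Finset.sum_eq_single_of_mem i0 hi0]
    · rw [he0, Real.rpow_zero, mul_one]; exact h0
    · intro i hi hne
      rw [Real.zero_rpow (he i hi hne).ne', mul_zero]
  have := hF.continuousAt.eventually_ne (x := (u0, (0:ℝ))) hF0
  rw [nhds_prod_eq] at this
  obtain ⟨pa, hpa, pb, hpb, h⟩ := Filter.eventually_prod_iff.mp this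
  have h3 : ∀ᶠ w in atBot, pb (Real.exp w) := Real.tendsto_exp_atBot.eventually hpb
  obtain ⟨R, hR⟩ := Filter.eventually_atBot.mp h3
  refine ⟨-R, ?_⟩
  filter_upwards [hpa] with u hu w hw
  have := h hu (hR w (by linarith))
  simp only at this
  intro h0
  apply this
  rw [← h0]
  refine Finset.sum_congr rfl fun i _ => ?_
  rw [← Real.exp_mul, mul_comm w]

lemma continuous_evB (b : GB) : Continuous (fun u => evB u b) :=
  continuous_iff_continuousAt.mpr fun u => (hasDerivAt_B b u).continuousAt

lemma bdd_roots (P : GA) (hP : P ≠ 0) (u0 : ℝ) (hu : Reg P u0) :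
    ∃ R : ℝ, ∀ᶠ u in 𝓝 u0, ∀ v, ev u v P = 0 → v ∈ Icc (-R) R := by
  have hne := support_nonempty hP
  set s := P.coeff.support
  obtain ⟨R1, h1⟩ := bdd_aux s (fun i u => evB u (P.coeff i)) (fun i => continuous_evB _)
    (fun i => i - s.min' hne) (s.min' hne) (s.min'_mem hne) (sub_self _)
    (fun i hi hi' => sub_pos.mpr (lt_of_le_of_ne (s.min'_le i hi) (Ne.symm hi'))) u0
    (hu _ (s.min'_mem hne))
  obtain ⟨R2, h2⟩ := bdd_aux s (fun i u => evB u (P.coeff i)) (fun i => continuous_evB _)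
    (fun i => s.max' hne - i) (s.max' hne) (s.max'_mem hne) (sub_self _)
    (fun i hi hi' => sub_pos.mpr (lt_of_le_of_ne (s.le_max' i hi) hi')) u0
    (hu _ (s.max'_mem hne))
  refine ⟨max R1 R2, ?_⟩
  filter_upwards [h1, h2] with u h1 h2 v hv
  rw [ev_eq_sum] at hv
  constructor
  · by_contra hlt
    push Not at hlt
    refine h1 v (by linarith [le_max_left R1 R2]) ?_
    have : ∑ i ∈ s, evB u (P.coeff i) * Real.exp ((i - s.min' hne) * v)
       = Real.exp (-(s.min' hne) * v) * ∑ i ∈ s, evB u (P.coeff i) * Real.exp (i * v) := by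
      rw [Finset.mul_sum]
      refine Finset.sum_congr rfl fun i _ => ?_
      rw [show (i - s.min' hne) * v = -(s.min' hne) * v + i * v by ring, Real.exp_add]; ring
    rw [this, hv, mul_zero]
  · by_contra hlt
    push Not at hlt
    refine h2 (-v) (by linarith [le_max_right R1 R2]) ?_
    have : ∑ i ∈ s, evB u (P.coeff i) * Real.exp ((s.max' hne - i) * (-v))
       = Real.exp (-(s.max' hne) * v) * ∑ i ∈ s, evB u (P.coeff i) * Real.exp (i * v) := by
      rw [Finset.mul_sum]
      refine Finset.sum_congr rfl fun i _ => ?_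
      rw [show (s.max' hne - i) * (-v) = -(s.max' hne) * v + i * v by ring, Real.exp_add]; ring
    rw [this, hv, mul_zero]

lemma tendsto_ev (P : GA) {l : Filter ℝ} {f g : ℝ → ℝ} {u0 v0 : ℝ} (hf : Tendsto f l (𝓝 u0))
    (hg : Tendsto g l (𝓝 v0)) : Tendsto (fun u => ev (f u) (g u) P) l (𝓝 (ev u0 v0 P)) := by
  have h1 := (continuous_ev P).tendsto (u0, v0)
  have h2 : Tendsto (fun u => (f u, g u)) l (𝓝 (u0, v0)) := hf.prodMk_nhds hg
  exact Tendsto.comp (f := fun u => (f u, g u)) h1 h2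

def Gap {ι : Type} (η : ι → ℝ → ℝ) (S : Set ι) (u : ℝ) : Set ℝ :=
  {v | ∀ i, (i ∈ S → η i u < v) ∧ (i ∉ S → v < η i u)}

lemma gap_nhds {ι : Type} [Finite ι] {η : ι → ℝ → ℝ} {S : Set ι} {u0 : ℝ}
    (hc : ∀ i, ContinuousAt (η i) u0) {ψ : ℝ → ℝ} (hψ : ContinuousAt ψ u0)
    (h : ψ u0 ∈ Gap η S u0) : ∀ᶠ u in 𝓝 u0, ψ u ∈ Gap η S u := by
  refine Filter.eventually_all.mpr fun i => ?_
  by_cases hi : i ∈ S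
  · filter_upwards [(hc i).eventually_lt hψ ((h i).1 hi)] with u hu
    exact ⟨fun _ => hu, fun h => absurd hi h⟩
  · filter_upwards [hψ.eventually_lt (hc i) ((h i).2 hi)] with u hu
    exact ⟨fun h => absurd h hi, fun _ => hu⟩

lemma gap_unique {ι : Type} {η : ι → ℝ → ℝ} {S : Set ι} {u γ : ℝ} {P : GA}
    (hcov : ∀ v, ev u v (DD γ P) = 0 → ∃ i, v = η i u) {v w : ℝ} (hv : v ∈ Gap η S u)
    (hw : w ∈ Gap η S u) (hv0 : ev u v P = 0) (hw0 : ev u w P = 0) : v = w := by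
  have key : ∀ v w, v ∈ Gap η S u → w ∈ Gap η S u → ev u v P = 0 → ev u w P = 0 → ¬ v < w := by
    intro v w hv hw hv0 hw0 hlt
    obtain ⟨t, ht, h0⟩ := rolle P γ u hlt hv0 hw0
    obtain ⟨i, rfl⟩ := hcov t h0
    by_cases hi : i ∈ S
    · exact lt_asymm ht.1 ((hv i).1 hi)
    · exact lt_asymm ht.2 ((hw i).2 hi)
  rcases lt_trichotomy v w with h | h | h
  · exact absurd h (key v w hv hw hv0 hw0)
  · exact h
  · exact absurd h (key w v hw hv hw0 hv0)

lemma gap_simple {ι : Type} {η : ι → ℝ → ℝ} {S : Set ι} {u γ : ℝ} {P : GA}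
    (hcov : ∀ v, ev u v (DD γ P) = 0 → ∃ i, v = η i u) {v : ℝ} (hv : v ∈ Gap η S u) :
    ev u v (DD γ P) ≠ 0 := by
  intro h
  obtain ⟨i, rfl⟩ := hcov v h
  by_cases hi : i ∈ S
  · exact lt_irrefl _ ((hv i).1 hi)
  · exact lt_irrefl _ ((hv i).2 hi)

lemma gap_lemma {ι : Type} [Finite ι] {η : ι → ℝ → ℝ} (S : Set ι) {γ : ℝ} {P : GA} (hP : P ≠ 0)
    {I : Set ℝ} (ho : IsOpen I) (hI : OrdConnected I)
    (hc : ∀ i, ∀ u ∈ I, ContinuousAt (η i) u)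
    (hcov : ∀ u ∈ I, ∀ v, ev u v (DD γ P) = 0 → ∃ i, v = η i u)
    (htri : ∀ i j, (∀ u ∈ I, η i u = η j u) ∨ (∀ u ∈ I, η i u ≠ η j u))
    (hPη : ∀ i, (∀ u ∈ I, ev u (η i u) P = 0) ∨ (∀ u ∈ I, ev u (η i u) P ≠ 0))
    (hreg : ∀ u ∈ I, Reg P u) :
    (∀ u ∈ I, ∃ v ∈ Gap η S u, ev u v P = 0) ∨ (∀ u ∈ I, ¬ ∃ v ∈ Gap η S u, ev u v P = 0) := by
  set E : Set ℝ := {u | u ∈ I ∧ ∃ v ∈ Gap η S u, ev u v P = 0} with hE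
  have hopen : IsOpen E := by
    rw [isOpen_iff_mem_nhds]
    rintro u0 ⟨hu0, v0, hv0, h0⟩
    have hs := gap_simple (hcov u0 hu0) hv0
    rw [ev_DD, h0, mul_zero, sub_zero] at hs
    obtain ⟨ψ, hψ0, ⟨d, hd⟩, -, h2⟩ := ift P u0 v0 h0 hs
    have := gap_nhds (S := S) (fun i => hc i u0 hu0) hd.continuousAt (by rw [hψ0]; exact hv0)
    filter_upwards [ho.mem_nhds hu0, this, h2] with u h1 h2 h3
    exact ⟨h1, ψ u, h2, h3⟩
  by_cases hne : (I ∩ E).Nonempty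
  swap
  · right
    intro u hu h
    exact hne ⟨u, hu, hu, h⟩
  left
  have hsub : I ⊆ E := by
    refine hI.isPreconnected.subset_of_closure_inter_subset hopen hne ?_
    rintro u0 ⟨hcl, hu0⟩
    refine ⟨hu0, ?_⟩
    rw [mem_closure_iff_nhdsWithin_neBot] at hcl
    let U := Ultrafilter.of (𝓝[E] u0)
    have hU : (U : Filter ℝ) ≤ 𝓝[E] u0 := Ultrafilter.of_le _
    have hUn : (U : Filter ℝ) ≤ 𝓝 u0 := hU.trans nhdsWithin_le_nhds
    have hUE : ∀ᶠ u in (U : Filter ℝ), u ∈ E := hU self_mem_nhdsWithin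
    choose! v hv using fun u (hu : u ∈ E) => hu.2
    obtain ⟨R, hR⟩ := bdd_roots P hP u0 (hreg u0 hu0)
    have hK : ((U.map v : Ultrafilter ℝ) : Filter ℝ) ≤ 𝓟 (Icc (-R) R) := by
      rw [le_principal_iff]
      change ∀ᶠ u in (U : Filter ℝ), v u ∈ Icc (-R) R
      filter_upwards [hUE, hUn hR] with u h1 h2
      exact h2 _ (hv u h1).2
    obtain ⟨v0, -, hv0⟩ := isCompact_iff_ultrafilter_le_nhds.mp isCompact_Icc _ hK
    have htv : Tendsto v U (𝓝 v0) := hv0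
    have htu : Tendsto (fun u : ℝ => u) U (𝓝 u0) := hUn
    have hP0 : ev u0 v0 P = 0 := by
      have h1 : Tendsto (fun u => ev u (v u) P) U (𝓝 (ev u0 v0 P)) :=
        tendsto_ev P htu htv
      have h2 : Tendsto (fun u => ev u (v u) P) U (𝓝 0) := by
        refine tendsto_const_nhds.congr' ?_
        filter_upwards [hUE] with u hu using (hv u hu).2.symm
      exact tendsto_nhds_unique h1 h2
    have htη : ∀ i, Tendsto (η i) U (𝓝 (η i u0)) := fun i => (hc i u0 hu0).tendsto.comp htu
    have hle : ∀ i, (i ∈ S → η i u0 ≤ v0) ∧ (i ∉ S → v0 ≤ η i u0) := by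
      intro i
      constructor
      · intro hi
        refine le_of_tendsto_of_tendsto (htη i) htv ?_
        filter_upwards [hUE] with u hu using ((hv u hu).1 i).1 hi |>.le
      · intro hi
        refine le_of_tendsto_of_tendsto htv (htη i) ?_
        filter_upwards [hUE] with u hu using ((hv u hu).1 i).2 hi |>.le
    have hkey : ∀ i, η i u0 ≠ v0 := by
      intro i hi
      have hPi : ∀ u ∈ I, ev u (η i u) P = 0 := by
        refine (hPη i).resolve_right fun h => h u0 hu0 ?_
        rw [hi]; exact hP0
      have hnb : ∀ᶠ u in (U : Filter ℝ), ∀ j,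
          ¬ ((v u < η j u ∧ η j u < η i u) ∨ (η i u < η j u ∧ η j u < v u)) := by
        refine Filter.eventually_all.mpr fun j => ?_
        rcases htri i j with h | h
        · filter_upwards [hUE] with u hu
          rw [h u hu.1]
          rintro (⟨_, h⟩ | ⟨h, _⟩) <;> exact lt_irrefl _ h
        · have h0 := h u0 hu0
          have hti := htη i
          rw [hi] at hti h0
          rcases lt_or_gt_of_ne h0 with h0 | h0
          · filter_upwards [hti.eventually_lt (htη j) h0, htv.eventually_lt (htη j) h0] with u h1 h2
            rintro (⟨_, h⟩ | ⟨_, h⟩) <;> linarith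
          · filter_upwards [(htη j).eventually_lt hti h0, (htη j).eventually_lt htv h0] with u h1 h2
            rintro (⟨h, _⟩ | ⟨h, _⟩) <;> linarith
      obtain ⟨u, hu, hnb⟩ := (hUE.and hnb).exists
      have hvu := hv u hu
      rcases lt_trichotomy (v u) (η i u) with h | h | h
      · obtain ⟨t, ht, h0⟩ := rolle P γ u h hvu.2 (hPi u hu.1)
        obtain ⟨j, rfl⟩ := hcov u hu.1 t h0
        exact hnb j (Or.inl ht)
      · by_cases hi : i ∈ S
        · exact ((hvu.1 i).1 hi).ne' h
        · exact ((hvu.1 i).2 hi).ne h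
      · obtain ⟨t, ht, h0⟩ := rolle P γ u h (hPi u hu.1) hvu.2
        obtain ⟨j, rfl⟩ := hcov u hu.1 t h0
        exact hnb j (Or.inr ht)
    exact ⟨v0, fun i => ⟨fun hi => lt_of_le_of_ne ((hle i).1 hi) (hkey i),
      fun hi => lt_of_le_of_ne ((hle i).2 hi) (hkey i).symm⟩, hP0⟩
  exact fun u hu => (hsub hu).2

/-- the branch in a gap is differentiable -/
lemma gap_branch {ι : Type} [Finite ι] {η : ι → ℝ → ℝ} (S : Set ι) {γ : ℝ} {P : GA}
    {I : Set ℝ} (ho : IsOpen I)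
    (hc : ∀ i, ∀ u ∈ I, ContinuousAt (η i) u)
    (hcov : ∀ u ∈ I, ∀ v, ev u v (DD γ P) = 0 → ∃ i, v = η i u)
    {ξ : ℝ → ℝ} (hξ : ∀ u ∈ I, ξ u ∈ Gap η S u ∧ ev u (ξ u) P = 0) :
    ∀ u ∈ I, ∃ d, HasDerivAt ξ d u := by
  intro u0 hu0
  obtain ⟨h1, h0⟩ := hξ u0 hu0
  have hs := gap_simple (hcov u0 hu0) h1
  rw [ev_DD, h0, mul_zero, sub_zero] at hs
  obtain ⟨ψ, hψ0, ⟨d, hd⟩, -, h2⟩ := ift P u0 (ξ u0) h0 hs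
  have := gap_nhds (S := S) (fun i => hc i u0 hu0) hd.continuousAt (by rw [hψ0]; exact h1)
  refine ⟨d, hd.congr_of_eventuallyEq ?_⟩
  filter_upwards [ho.mem_nhds hu0, this, h2] with u h1 h2 h3
  exact gap_unique (hcov u h1) (hξ u h1).1 h2 (hξ u h1).2 h3

structure HF (l : Filter ℝ) (H : Set (ℝ → ℝ)) : Prop where
  cs : ∀ f ∈ H, CS l f
  const : ∀ c : ℝ, (fun _ => c) ∈ H
  add : ∀ f ∈ H, ∀ g ∈ H, (fun u => f u + g u) ∈ H
  mul : ∀ f ∈ H, ∀ g ∈ H, (fun u => f u * g u) ∈ H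
  div : ∀ f ∈ H, ∀ g ∈ H, (∀ᶠ u in l, g u ≠ 0) → (fun u => f u / g u) ∈ H
  der : ∀ f ∈ H, ∃ f' ∈ H, ∀ᶠ u in l, HasDerivAt f (f' u) u

lemma hardy_pow {l : Filter ℝ} (hl : EndF l) {H : Set (ℝ → ℝ)} (hH : HF l H) {ξ D : ℝ → ℝ}
    (hD : D ∈ H) (hξ : ∀ᶠ u in l, HasDerivAt ξ (D u) u) :
    ∀ (n : ℕ) (s : Finset ℝ) (h : ℝ → ℝ → ℝ), s.card = n → (∀ i, h i ∈ H) →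
      CS l (fun u => ∑ i ∈ s, h i u * Real.exp (i * ξ u)) := by
  classical
  intro n
  induction n with
  | zero =>
    intro s h hs _
    rw [Finset.card_eq_zero] at hs
    subst hs
    exact CS_zero (by simp)
  | succ n ih =>
    intro s h hs hh
    obtain ⟨i0, hi0⟩ : s.Nonempty := Finset.card_pos.mp (by omega)
    have hcard : (s.erase i0).card = n := by rw [Finset.card_erase_of_mem hi0, hs]; rfl
    rcases (hH.cs _ (hh i0)).dich with h0 | h0
    · refine (ih _ h hcard hh).congr ?_
      filter_upwards [h0] with u hu
      rw [← Finset.add_sum_erase s _ hi0, hu]; ring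
    · have hq : ∀ i, (fun u => h i u / h i0 u) ∈ H := fun i => hH.div _ (hh i) _ (hh i0) h0
      choose q' hq' hqd using fun i => hH.der _ (hq i)
      set k : ℝ → ℝ → ℝ := fun i u => q' i u + h i u / h i0 u * ((i - i0) * D u) with hk
      have hkH : ∀ i, k i ∈ H := fun i =>
        hH.add _ (hq' i) _ (hH.mul _ (hq i) _ (hH.mul _ (hH.const (i - i0)) _ hD))
      have h1 := ih (s.erase i0) k hcard hkH
      have hpos : ∀ c : ℝ, CS l (fun u => Real.exp (c * ξ u)) := fun c =>
        ⟨1, Eventually.of_forall fun u => sign_pos (Real.exp_pos _)⟩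
      have hg : CS l (fun u => ∑ i ∈ s, h i u / h i0 u * Real.exp ((i - i0) * ξ u)) := by
        have : ∀ᶠ u in l, HasDerivAt
            (fun u => 1 + ∑ i ∈ s.erase i0, h i u / h i0 u * Real.exp ((i - i0) * ξ u))
            (Real.exp (-i0 * ξ u) * ∑ i ∈ s.erase i0, k i u * Real.exp (i * ξ u)) u := by
          have hall : ∀ᶠ u in l, ∀ i ∈ s.erase i0,
              HasDerivAt (fun u => h i u / h i0 u) (q' i u) u :=
            (Finset.eventually_all (l := l) _).mpr fun i _ => hqd i
          filter_upwards [hξ, hall] with u h1 h2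
          have e : Real.exp (-i0 * ξ u) * ∑ i ∈ s.erase i0, k i u * Real.exp (i * ξ u)
              = ∑ i ∈ s.erase i0, (q' i u * Real.exp ((i - i0) * ξ u) +
                h i u / h i0 u * (Real.exp ((i - i0) * ξ u) * ((i - i0) * D u))) := by
            rw [Finset.mul_sum]
            refine Finset.sum_congr rfl fun i _ => ?_
            rw [show (i - i0) * ξ u = -i0 * ξ u + i * ξ u by ring, Real.exp_add, hk]
            ring
          rw [e]
          refine (HasDerivAt.fun_sum fun i hi => ?_).const_add 1
          exact (h2 i hi).mul ((h1.const_mul (i - i0)).exp)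
        refine (CS_of_deriv hl this ((hpos (-i0)).mul h1)).congr ?_
        filter_upwards [h0] with u hu
        rw [← Finset.add_sum_erase s _ hi0, div_self hu, sub_self, zero_mul, Real.exp_zero, one_mul]
      refine (((hH.cs _ (hh i0)).mul (hpos i0)).mul hg).congr ?_
      filter_upwards [h0] with u hu
      rw [Finset.mul_sum]
      refine Finset.sum_congr rfl fun i _ => ?_
      have : Real.exp (i * ξ u) = Real.exp (i0 * ξ u) * Real.exp ((i - i0) * ξ u) := by
        rw [← Real.exp_add]; ring_nf
      rw [this]
      field_simp

theorem alg_dich {F C : Type*} [Field F] [CommRing C] [Nontrivial C] [IsReduced C]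
    (hconn : ∀ g h : C, IsCoprime g h → g * h = 0 → g = 0 ∨ h = 0)
    (Φ : Polynomial F →+* C) {p : Polynomial F} (hp : p ≠ 0) (h0 : Φ p = 0) (q : Polynomial F) :
    Φ q = 0 ∨ IsUnit (Φ q) := by
  have key : p ≠ 0 → Φ p = 0 → ∃ r, Prime r ∧ Φ r = 0 := by
    refine UniqueFactorizationMonoid.induction_on_coprime
      (P := fun p => p ≠ 0 → Φ p = 0 → ∃ r, Prime r ∧ Φ r = 0) p ?_ ?_ ?_ ?_
    · intro h; exact absurd rfl h
    · intro x hx _ h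
      exact absurd (h ▸ hx.map Φ) not_isUnit_zero
    · intro x i hx _ h
      rw [map_pow] at h
      exact ⟨x, hx, eq_zero_of_pow_eq_zero h⟩
    · intro x y hxy hx hy hne h
      rw [map_mul] at h
      rcases hconn _ _ (hxy.isCoprime.map Φ) h with h | h
      · exact hx (left_ne_zero_of_mul hne) h
      · exact hy (right_ne_zero_of_mul hne) h
  obtain ⟨r, hr, hr0⟩ := key hp h0
  by_cases hd : r ∣ q
  · left
    obtain ⟨t, rfl⟩ := hd
    rw [map_mul, hr0, zero_mul]
  · right
    obtain ⟨a, b, hab⟩ := ((hr.irreducible).coprime_iff_not_dvd).mpr hd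
    have := congrArg Φ hab
    rw [map_add, map_mul, map_mul, hr0, mul_zero, zero_add, map_one] at this
    exact IsUnit.of_mul_eq_one_right _ this

def CG (l : Filter ℝ) : Subring (Germ l ℝ) where
  carrier := {g | ∃ f : ℝ → ℝ, (∀ᶠ u in l, ContinuousAt f u) ∧ g = (f : Germ l ℝ)}
  zero_mem' := ⟨fun _ => 0, Eventually.of_forall fun _ => continuousAt_const, rfl⟩
  one_mem' := ⟨fun _ => 1, Eventually.of_forall fun _ => continuousAt_const, rfl⟩
  add_mem' := by
    rintro _ _ ⟨f, hf, rfl⟩ ⟨g, hg, rfl⟩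
    exact ⟨f + g, by filter_upwards [hf, hg] with u h1 h2 using h1.add h2, rfl⟩
  mul_mem' := by
    rintro _ _ ⟨f, hf, rfl⟩ ⟨g, hg, rfl⟩
    exact ⟨f * g, by filter_upwards [hf, hg] with u h1 h2 using h1.mul h2, rfl⟩
  neg_mem' := by
    rintro _ ⟨f, hf, rfl⟩
    exact ⟨-f, by filter_upwards [hf] with u h1 using h1.neg, rfl⟩

lemma CG_conn {l : Filter ℝ} (hl : EndF l) (g h : CG l) (hc : IsCoprime g h) (h0 : g * h = 0) :
    g = 0 ∨ h = 0 := by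
  obtain ⟨_, g, hg, rfl⟩ := g
  obtain ⟨_, h, hh, rfl⟩ := h
  obtain ⟨⟨_, a, ha, rfl⟩, ⟨_, b, hb, rfl⟩, hab⟩ := hc
  have e0 : ∀ᶠ u in l, g u * h u = 0 := Germ.coe_eq.mp (congrArg Subtype.val h0)
  have e1 : ∀ᶠ u in l, a u * g u + b u * h u = 1 := Germ.coe_eq.mp (congrArg Subtype.val hab)
  have hcs : CS l (fun u => g u ^ 2 - h u ^ 2) := by
    refine CS_of_cont hl ?_ ?_
    · filter_upwards [hg, hh] with u h1 h2 using (h1.pow 2).sub (h2.pow 2)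
    · filter_upwards [e0, e1] with u h1 h2 h3
      rcases mul_eq_zero.mp h1 with h | h
      · rw [h] at h2 h3
        simp_all
      · rw [h] at h2 h3
        simp_all
  obtain ⟨σ, hσ⟩ := hcs
  rcases σ with _ | _ | _
  · right
    refine Subtype.ext (Germ.coe_eq.mpr ?_)
    filter_upwards [e0, e1, hσ] with u h1 h2 h3
    have h3 : SignType.sign (g u ^ 2 - h u ^ 2) = 0 := h3
    rw [sign_eq_zero_iff] at h3
    rcases mul_eq_zero.mp h1 with h | h
    · rw [h] at h3
      simpa using h3
    · exact h
  · left
    refine Subtype.ext (Germ.coe_eq.mpr ?_)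
    filter_upwards [e0, hσ] with u h1 h3
    have h3 : SignType.sign (g u ^ 2 - h u ^ 2) = -1 := h3
    rw [sign_eq_neg_one_iff] at h3
    rcases mul_eq_zero.mp h1 with h | h
    · exact h
    · rw [h] at h3; nlinarith [sq_nonneg (g u)]
  · right
    refine Subtype.ext (Germ.coe_eq.mpr ?_)
    filter_upwards [e0, hσ] with u h1 h3
    have h3 : SignType.sign (g u ^ 2 - h u ^ 2) = 1 := h3
    rw [sign_eq_one_iff] at h3
    rcases mul_eq_zero.mp h1 with h4 | h4
    · rw [h4] at h3; nlinarith [sq_nonneg (h u)]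
    · exact h4

lemma CG_red (l : Filter ℝ) : IsReduced (CG l) := by
  refine ⟨?_⟩
  rintro ⟨_, g, hg, rfl⟩ ⟨n, hn⟩
  have e0 : ∀ᶠ u in l, g u ^ n = 0 := Germ.coe_eq.mp (congrArg Subtype.val hn)
  refine Subtype.ext (Germ.coe_eq.mpr ?_)
  filter_upwards [e0] with u h
  exact eq_zero_of_pow_eq_zero h

lemma CG_nt {l : Filter ℝ} (hl : EndF l) : Nontrivial (CG l) := by
  have := hl.neBot
  infer_instance

lemma CG_unit {l : Filter ℝ} (f : ℝ → ℝ) (hf : (f : Germ l ℝ) ∈ CG l)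
    (hc : ∀ᶠ u in l, ContinuousAt f u) :
    IsUnit (⟨f, hf⟩ : CG l) ↔ ∀ᶠ u in l, f u ≠ 0 := by
  constructor
  · intro h
    obtain ⟨⟨_, b, hb, rfl⟩, h⟩ := h.exists_right_inv
    have e0 : ∀ᶠ u in l, f u * b u = 1 := Germ.coe_eq.mp (congrArg Subtype.val h)
    filter_upwards [e0] with u hu h0
    rw [h0, zero_mul] at hu
    exact zero_ne_one hu
  · intro h
    refine IsUnit.of_mul_eq_one ⟨((fun u => (f u)⁻¹ : ℝ → ℝ) : Germ l ℝ), fun u => (f u)⁻¹, ?_, rfl⟩ ?_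
    · filter_upwards [h, hc] with u h1 h2 using h2.inv₀ h1
    · refine Subtype.ext (Germ.coe_eq.mpr ?_)
      filter_upwards [h] with u hu
      exact mul_inv_cancel₀ hu

instance GA_dom : IsDomain GA := by infer_instance

/-- evaluation along `ξ` as a map to germs -/
def φ {l : Filter ℝ} {ξ : ℝ → ℝ} (hξ : ∀ᶠ u in l, ContinuousAt ξ u) : GA →+* CG l :=
  RingHom.codRestrict ((Germ.coeRingHom l).comp (RingHom.pi fun u => ev u (ξ u))) (CG l)
    (fun Q => ⟨fun u => ev u (ξ u) Q, by
      filter_upwards [hξ] with u hu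
      exact tendsto_ev Q tendsto_id hu, rfl⟩)

lemma φ_zero {l : Filter ℝ} {ξ : ℝ → ℝ} (hξ : ∀ᶠ u in l, ContinuousAt ξ u) (Q : GA) :
    φ hξ Q = 0 ↔ ∀ᶠ u in l, ev u (ξ u) Q = 0 := by
  rw [Subtype.ext_iff]
  exact Germ.coe_eq

lemma φ_unit {l : Filter ℝ} {ξ : ℝ → ℝ} (hξ : ∀ᶠ u in l, ContinuousAt ξ u) (Q : GA) :
    IsUnit (φ hξ Q) ↔ ∀ᶠ u in l, ev u (ξ u) Q ≠ 0 := by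
  refine CG_unit (fun u => ev u (ξ u) Q) _ ?_
  filter_upwards [hξ] with u hu
  exact tendsto_ev Q tendsto_id hu

lemma RM_sup (M : AddSubmonoid ℝ) (δ : ℝ) (Q : GA)
    (hQ : Q ∈ RM (M ⊔ AddSubmonoid.closure {δ})) :
    ∃ q : Polynomial (RM M), q.eval₂ (RM M).subtype (AddMonoidAlgebra.single δ 1) = Q := by
  change Q ∈ (Polynomial.eval₂RingHom (RM M).subtype (AddMonoidAlgebra.single δ 1)).range
  rw [GA_sum Q]
  refine Subring.sum_mem _ fun β hβ => ?_
  obtain ⟨m, hm, d, hd, rfl⟩ := AddSubmonoid.mem_sup.mp (hQ β (by simpa using hβ))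
  obtain ⟨n, rfl⟩ := AddSubmonoid.mem_closure_singleton.mp hd
  refine ⟨Polynomial.C ⟨_, single_mem_RM hm (Q.coeff (m + n • δ))⟩ * Polynomial.X ^ n, ?_⟩
  simp [AddMonoidAlgebra.single_pow, AddMonoidAlgebra.single_mul_single]

lemma tameA {l : Filter ℝ} (hl : EndF l) {ξ : ℝ → ℝ} (hξ : ∀ᶠ u in l, ContinuousAt ξ u)
    {M : AddSubmonoid ℝ} {δ : ℝ} {P : GA} (hP : P ∈ RM (M ⊔ AddSubmonoid.closure {δ}))
    (hP0 : P ≠ 0) (hPξ : ∀ᶠ u in l, ev u (ξ u) P = 0)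
    (hT : ∀ T ∈ RM M, T ≠ 0 → ∀ᶠ u in l, ev u (ξ u) T ≠ 0)
    (Q : GA) (hQ : Q ∈ RM (M ⊔ AddSubmonoid.closure {δ})) :
    (∀ᶠ u in l, ev u (ξ u) Q = 0) ∨ (∀ᶠ u in l, ev u (ξ u) Q ≠ 0) := by
  have := CG_nt hl
  have := CG_red l
  have hunit : ∀ y : nonZeroDivisors (RM M), IsUnit (((φ hξ).comp (RM M).subtype) y) := by
    intro y
    refine (φ_unit hξ _).mpr (hT _ (y : RM M).2 ?_)
    simp
  let lft : FractionRing (RM M) →+* CG l := IsLocalization.lift hunit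
  let Φ : Polynomial (FractionRing (RM M)) →+* CG l :=
    Polynomial.eval₂RingHom lft (φ hξ (AddMonoidAlgebra.single δ 1))
  have hΦ : ∀ q : Polynomial (RM M), Φ (q.map (algebraMap _ _)) =
      φ hξ (q.eval₂ (RM M).subtype (AddMonoidAlgebra.single δ 1)) := by
    intro q
    rw [Polynomial.hom_eval₂]
    change Polynomial.eval₂ _ _ _ = _
    rw [Polynomial.eval₂_map]
    congr 1
    exact IsLocalization.lift_comp hunit
  obtain ⟨p, hp⟩ := RM_sup M δ P hP
  obtain ⟨q, hq⟩ := RM_sup M δ Q hQ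
  have := alg_dich (CG_conn hl) Φ (p := p.map (algebraMap _ _)) ?_ ?_ (q.map (algebraMap _ _))
  · rw [hΦ, hq] at this
    rw [← φ_zero hξ, ← φ_unit hξ]
    exact this
  · rw [Polynomial.map_ne_zero_iff (IsFractionRing.injective _ _)]
    rintro rfl
    simp at hp
    exact hP0 hp.symm
  · rw [hΦ, hp]
    exact (φ_zero hξ P).mpr hPξ

def Cov (l : Filter ℝ) (P : GA) : Prop :=
  ∃ (ι : Type) (_ : Finite ι) (ξ : ι → ℝ → ℝ), (∀ i, Nice l (ξ i)) ∧
    ∀ᶠ u in l, ∀ v, ev u v P = 0 → ∃ i, v = ξ i u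

def SM (l : Filter ℝ) (M : AddSubmonoid ℝ) : Prop := ∀ P ∈ RM M, P ≠ 0 → Cov l P

def HH (l : Filter ℝ) (ξ : ℝ → ℝ) (R : Subring GA) : Set (ℝ → ℝ) :=
  {f | ∃ N ∈ R, ∃ T ∈ R, (∀ᶠ u in l, ev u (ξ u) T ≠ 0) ∧
    ∀ᶠ u in l, f u = ev u (ξ u) N / ev u (ξ u) T}

lemma HH_single {l : Filter ℝ} {ξ : ℝ → ℝ} {M : AddSubmonoid ℝ} (b : GB) :
    (fun u => evB u b) ∈ HH l ξ (RM M) := by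
  refine ⟨_, single_mem_RM M.zero_mem b, 1, Subring.one_mem _, ?_, ?_⟩
  · simp
  · simp [ev_single]

lemma HH_HF {l : Filter ℝ} (hl : EndF l) {ξ : ℝ → ℝ} {M : AddSubmonoid ℝ} {P : GA}
    (hP : P ∈ RM M)
    (hdich : ∀ Q ∈ RM M, (∀ᶠ u in l, ev u (ξ u) Q = 0) ∨ (∀ᶠ u in l, ev u (ξ u) Q ≠ 0))
    (hd : ∀ᶠ u in l, HasDerivAt ξ (-ev u (ξ u) (DU P) / ev u (ξ u) (DD 0 P)) u)
    (hE : ∀ᶠ u in l, ev u (ξ u) (DD 0 P) ≠ 0) : HF l (HH l ξ (RM M)) := by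
  have hcont : ∀ Q, ∀ᶠ u in l, ContinuousAt (fun u => ev u (ξ u) Q) u := by
    intro Q
    filter_upwards [hd] with u hu
    exact tendsto_ev Q tendsto_id hu.continuousAt
  constructor
  · rintro f ⟨N, hN, T, hT, hT0, hf⟩
    refine CS.congr (f := fun u => ev u (ξ u) N / ev u (ξ u) T) ?_ (hf.mono fun u hu => hu.symm)
    rcases hdich N hN with h | h
    · refine CS_zero ?_
      filter_upwards [h] with u hu
      rw [hu, zero_div]
    · refine CS_of_cont hl ?_ ?_
      · filter_upwards [hcont N, hcont T, hT0] with u h1 h2 h3 using h1.div h2 h3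
      · filter_upwards [h, hT0] with u h1 h3 using div_ne_zero h1 h3
  · intro c
    have := HH_single (l := l) (ξ := ξ) (M := M) (AddMonoidAlgebra.single 0 c)
    simpa [evB_single] using this
  · rintro f ⟨N, hN, T, hT, hT0, hf⟩ f' ⟨N', hN', T', hT', hT0', hf'⟩
    refine ⟨N * T' + N' * T, (RM M).add_mem ((RM M).mul_mem hN hT') ((RM M).mul_mem hN' hT),
      T * T', (RM M).mul_mem hT hT', ?_, ?_⟩
    · filter_upwards [hT0, hT0'] with u h1 h2
      rw [map_mul]; exact mul_ne_zero h1 h2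
    · filter_upwards [hT0, hT0', hf, hf'] with u h1 h2 h3 h4
      rw [h3, h4, map_add, map_mul, map_mul, map_mul]
      field_simp
  · rintro f ⟨N, hN, T, hT, hT0, hf⟩ f' ⟨N', hN', T', hT', hT0', hf'⟩
    refine ⟨N * N', (RM M).mul_mem hN hN',
      T * T', (RM M).mul_mem hT hT', ?_, ?_⟩
    · filter_upwards [hT0, hT0'] with u h1 h2
      rw [map_mul]; exact mul_ne_zero h1 h2
    · filter_upwards [hT0, hT0', hf, hf'] with u h1 h2 h3 h4
      rw [h3, h4, map_mul, map_mul]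
      field_simp
  · rintro f ⟨N, hN, T, hT, hT0, hf⟩ f' ⟨N', hN', T', hT', hT0', hf'⟩ hne
    refine ⟨N * T', (RM M).mul_mem hN hT',
      T * N', (RM M).mul_mem hT hN', ?_, ?_⟩
    · filter_upwards [hT0, hf', hne] with u h1 h2 h3
      rw [map_mul]
      refine mul_ne_zero h1 fun h => h3 ?_
      rw [h2, h, zero_div]
    · filter_upwards [hT0, hT0', hf, hf'] with u h1 h2 h3 h4
      rw [h3, h4, map_mul, map_mul]
      field_simp
  · rintro f ⟨N, hN, T, hT, hT0, hf⟩
    let A : GA → GA := fun N => DU N * DD 0 P - DU P * DD 0 N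
    have hA : ∀ N ∈ RM M, A N ∈ RM M := fun N hN =>
      (RM M).sub_mem ((RM M).mul_mem (DU_mem hN) (DD_mem 0 hP))
        ((RM M).mul_mem (DU_mem hP) (DD_mem 0 hN))
    let W := A N * T - N * A T
    let V := DD 0 P * T ^ 2
    refine ⟨fun u => ev u (ξ u) W / ev u (ξ u) V,
      ⟨W, (RM M).sub_mem ((RM M).mul_mem (hA N hN) hT) ((RM M).mul_mem hN (hA T hT)), V,
        (RM M).mul_mem (DD_mem 0 hP) ((RM M).pow_mem hT 2), ?_, Eventually.of_forall fun _ => rfl⟩, ?_⟩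
    · filter_upwards [hE, hT0] with u h1 h2
      simp only [V, map_mul, map_pow]
      exact mul_ne_zero h1 (pow_ne_zero _ h2)
    · filter_upwards [hl.nhds hf, hd, hE, hT0] with u h1 h2 h3 h4
      have := ((chain_ev N h2).div (chain_ev T h2) h4).congr_of_eventuallyEq h1
      refine this.congr_deriv ?_
      simp only [W, V, A, map_mul, map_pow, map_sub]
      field_simp
      ring

lemma deriv_branch {l : Filter ℝ} (hl : EndF l) {ξ : ℝ → ℝ} {P : GA} {γ : ℝ}
    (hd : ∀ᶠ u in l, ∃ d, HasDerivAt ξ d u) (h0 : ∀ᶠ u in l, ev u (ξ u) P = 0)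
    (hs : ∀ᶠ u in l, ev u (ξ u) (DD γ P) ≠ 0) :
    (∀ᶠ u in l, HasDerivAt ξ (-ev u (ξ u) (DU P) / ev u (ξ u) (DD 0 P)) u) ∧
      (∀ᶠ u in l, ev u (ξ u) (DD 0 P) ≠ 0) := by
  have hE : ∀ᶠ u in l, ev u (ξ u) (DD 0 P) ≠ 0 := by
    filter_upwards [h0, hs] with u h1 h2
    rwa [ev_DD, h1, mul_zero, sub_zero] at h2
  refine ⟨?_, hE⟩
  filter_upwards [hd, hl.nhds h0, hE] with u ⟨d, h1⟩ h2 h3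
  have e := (chain_ev P h1).unique ((hasDerivAt_const u (0:ℝ)).congr_of_eventuallyEq h2)
  refine h1.congr_deriv ?_
  field_simp
  linarith

lemma tame {l : Filter ℝ} (hl : EndF l) {M : AddSubmonoid ℝ} {δ : ℝ} (hS : SM l M) {ξ : ℝ → ℝ}
    {P : GA} {γ : ℝ} (hP : P ∈ RM (M ⊔ AddSubmonoid.closure {δ})) (hP0 : P ≠ 0)
    (hd : ∀ᶠ u in l, ∃ d, HasDerivAt ξ d u) (h0 : ∀ᶠ u in l, ev u (ξ u) P = 0)
    (hs : ∀ᶠ u in l, ev u (ξ u) (DD γ P) ≠ 0) : Nice l ξ := by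
  have hcont : ∀ᶠ u in l, ContinuousAt ξ u := hd.mono fun u ⟨d, h⟩ => h.continuousAt
  obtain ⟨hder, hE⟩ := deriv_branch hl hd h0 hs
  by_cases hT : ∀ T ∈ RM M, T ≠ 0 → ∀ᶠ u in l, ev u (ξ u) T ≠ 0
  · have hH := HH_HF hl hP (tameA hl hcont hP hP0 h0 hT) hder hE
    have hD : (fun u => -ev u (ξ u) (DU P) / ev u (ξ u) (DD 0 P)) ∈
        HH l ξ (RM (M ⊔ AddSubmonoid.closure {δ})) :=
      ⟨-DU P, Subring.neg_mem _ (DU_mem hP), DD 0 P, DD_mem 0 hP, hE, by simp⟩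
    refine ⟨⟨_, hder, hH.cs _ hD⟩, fun Q => ?_⟩
    have := hardy_pow hl hH hD hder _ Q.coeff.support (fun β u => evB u (Q.coeff β)) rfl
      (fun β => HH_single _)
    refine this.congr (Eventually.of_forall fun u => ?_)
    rw [ev_eq_sum]
  · push Not at hT
    obtain ⟨T, hTM, hT0, hfr⟩ := hT
    obtain ⟨ι, _, η, hη, hcov⟩ := hS T hTM hT0
    have : ∃ i, ∃ᶠ u in l, ξ u = η i u := by
      by_contra hno
      simp only [not_exists, not_frequently] at hno
      apply hfr
      filter_upwards [Filter.eventually_all.mpr hno, hcov] with u h1 h2 h3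
      obtain ⟨i, hi⟩ := h2 _ h3
      exact h1 i hi
    obtain ⟨i, hi⟩ := this
    have hPη : ∀ᶠ u in l, ev u (η i u) P = 0 := by
      refine ((hη i).2 P).of_freq ?_
      refine (hi.and_eventually h0).mono fun u hu => ?_
      rw [← hu.1]; exact hu.2
    obtain ⟨I, hI, ho, hIc, _, h⟩ := hl.ev
      (hcont.and ((hη i).cont.and (h0.and (hPη.and hE))))
    have hsub : I ⊆ {u | u ∈ I ∧ ξ u = η i u} := by
      refine hIc.isPreconnected.subset_of_closure_inter_subset ?_ ?_ ?_
      · rw [isOpen_iff_mem_nhds]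
        rintro u0 ⟨hu0, he⟩
        obtain ⟨h1, h2, h3, h4, h5⟩ := h u0 hu0
        obtain ⟨ψ, -, -, h6, -⟩ := ift P u0 (ξ u0) h3 h5
        have h7 : Tendsto (fun u => (u, ξ u)) (𝓝 u0) (𝓝 (u0, ξ u0)) :=
          tendsto_id.prodMk_nhds h1
        have h8 : Tendsto (fun u => (u, η i u)) (𝓝 u0) (𝓝 (u0, ξ u0)) := by
          rw [he]; exact tendsto_id.prodMk_nhds h2
        filter_upwards [ho.mem_nhds hu0, h7.eventually h6, h8.eventually h6] with u g1 g2 g3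
        refine ⟨g1, ?_⟩
        rw [← g2.mp (h u g1).2.2.1, ← g3.mp (h u g1).2.2.2.1]
      · obtain ⟨u, hu⟩ := (hi.and_eventually hI).exists
        exact ⟨u, hu.2, hu.2, hu.1⟩
      · rintro u0 ⟨hcl, hu0⟩
        refine ⟨hu0, ?_⟩
        rw [mem_closure_iff_nhdsWithin_neBot] at hcl
        obtain ⟨h1, h2, -⟩ := h u0 hu0
        refine tendsto_nhds_unique_of_eventuallyEq (l := 𝓝[{u | u ∈ I ∧ ξ u = η i u}] u0) (h1.tendsto.mono_left nhdsWithin_le_nhds)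
          (h2.tendsto.mono_left nhdsWithin_le_nhds) ?_
        filter_upwards [self_mem_nhdsWithin] with u hu using hu.2
    refine (hη i).congr hl ?_
    filter_upwards [hI] with u hu using (hsub hu).2.symm

lemma SM_step {l : Filter ℝ} (hl : EndF l) {M : AddSubmonoid ℝ} {δ : ℝ} (hS : SM l M) :
    SM l (M ⊔ AddSubmonoid.closure {δ}) := by
  suffices H : ∀ n : ℕ, ∀ P ∈ RM (M ⊔ AddSubmonoid.closure {δ}), P.coeff.support.card = n →
      P ≠ 0 → Cov l P from fun P hP hP0 => H _ P hP rfl hP0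
  intro n
  induction n with
  | zero =>
    intro P _ hc h0
    exact absurd (by simpa using hc) h0
  | succ n ih =>
    intro P hP hcard hP0
    obtain ⟨γ, hγ⟩ := support_nonempty hP0
    have hc1 : (DD γ P).coeff.support.card = n := by
      rw [DD_support, Finset.card_erase_of_mem hγ, hcard]; rfl
    by_cases hD0 : DD γ P = 0
    · refine ⟨Empty, inferInstance, Empty.elim, fun i => i.elim, ?_⟩
      filter_upwards [reg_ev hl P] with u hu v hv
      have := zeros_card hP0 hu {v} (by simpa using hv)
      rw [hD0] at hc1
      simp at hc1 this
      omega
    obtain ⟨ι₀, _, η₀, hη₀, hcov₀⟩ := ih _ (DD_mem γ hP) hc1 hD0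
    let ι := {i : ι₀ // ∀ᶠ u in l, ev u (η₀ i u) (DD γ P) = 0}
    let η : ι → ℝ → ℝ := fun i => η₀ i
    have hη : ∀ i, Nice l (η i) := fun i => hη₀ i
    have hcov : ∀ᶠ u in l, ∀ v, ev u v (DD γ P) = 0 → ∃ i, v = η i u := by
      have h1 : ∀ᶠ u in l, ∀ i : ι₀, (¬ ∀ᶠ u in l, ev u (η₀ i u) (DD γ P) = 0) →
          ev u (η₀ i u) (DD γ P) ≠ 0 := by
        refine Filter.eventually_all.mpr fun i => ?_
        rcases ((hη₀ i).2 (DD γ P)).dich with h | h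
        · exact Eventually.of_forall fun u hn => absurd h hn
        · exact h.mono fun u hu _ => hu
      filter_upwards [hcov₀, h1] with u h1 h2 v hv
      obtain ⟨i, hi⟩ := h1 v hv
      by_cases h : ∀ᶠ u in l, ev u (η₀ i u) (DD γ P) = 0
      · exact ⟨⟨i, h⟩, hi⟩
      · exact absurd (hi ▸ hv) (h2 i h)
    have htri : ∀ i j, CS l (fun u => η i u - η j u) := fun i j =>
      (hη i).tri hl (hη j) hD0 i.2 j.2
    choose σ hσ using htri
    choose τ hτ using fun i => (hη i).2 P
    obtain ⟨I, hI, ho, hIc, ⟨a, ha⟩, h⟩ := hl.ev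
      ((Filter.eventually_all.mpr fun i => (hη i).cont).and (hcov.and
        ((Filter.eventually_all.mpr fun i => Filter.eventually_all.mpr fun j => hσ i j).and
          ((Filter.eventually_all.mpr fun i => hτ i).and (reg_ev hl P)))))
    have hcI : ∀ i, ∀ u ∈ I, ContinuousAt (η i) u := fun i u hu => (h u hu).1 i
    have hcovI : ∀ u ∈ I, ∀ v, ev u v (DD γ P) = 0 → ∃ i, v = η i u := fun u hu => (h u hu).2.1
    have hgap : ∀ S : Set ι, (∀ u ∈ I, ∃ v ∈ Gap η S u, ev u v P = 0) ∨
        (∀ u ∈ I, ¬ ∃ v ∈ Gap η S u, ev u v P = 0) := by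
      intro S
      refine gap_lemma (γ := γ) S hP0 ho hIc hcI hcovI ?_ ?_ (fun u hu => (h u hu).2.2.2.2)
      · intro i j
        by_cases hs : σ i j = 0
        · left
          intro u hu
          have := (h u hu).2.2.1 i j
          rw [hs, sign_eq_zero_iff, sub_eq_zero] at this
          exact this
        · right
          intro u hu he
          have := (h u hu).2.2.1 i j
          beta_reduce at this
          rw [he, sub_self, sign_zero] at this
          exact hs this.symm
      · intro i
        by_cases hs : τ i = 0
        · left
          intro u hu
          have := (h u hu).2.2.2.1 i
          rw [hs, sign_eq_zero_iff] at this
          exact this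
        · right
          intro u hu he
          have := (h u hu).2.2.2.1 i
          beta_reduce at this
          rw [he, sign_zero] at this
          exact hs this.symm
    let 𝒮 := {S : Set ι // ∀ u ∈ I, ∃ v ∈ Gap η S u, ev u v P = 0}
    choose! ξ hξ using fun S : 𝒮 => S.2
    have hnice : ∀ S : 𝒮, Nice l (ξ S) := by
      intro S
      refine tame hl hS (γ := γ) hP hP0 ?_ ?_ ?_
      · filter_upwards [hI] with u hu
        exact gap_branch S.1 ho hcI hcovI (hξ S) u hu
      · filter_upwards [hI] with u hu using (hξ S u hu).2
      · filter_upwards [hI] with u hu using gap_simple (hcovI u hu) (hξ S u hu).1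
    refine ⟨ι ⊕ 𝒮, inferInstance, Sum.elim η ξ, ?_, ?_⟩
    · rintro (i | S)
      · exact hη i
      · exact hnice S
    · filter_upwards [hI] with u hu v hv
      by_cases he : ∃ i, v = η i u
      · obtain ⟨i, hi⟩ := he
        exact ⟨Sum.inl i, hi⟩
      · push Not at he
        have hvG : v ∈ Gap η {i | η i u < v} u := fun i =>
          ⟨fun hi => hi, fun hi => lt_of_le_of_ne (not_lt.mp hi) (he i)⟩
        rcases hgap {i | η i u < v} with hg | hg
        · refine ⟨Sum.inr ⟨_, hg⟩, ?_⟩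
          have := hξ ⟨_, hg⟩ u hu
          exact gap_unique (hcovI u hu) hvG this.1 hv this.2
        · exact absurd ⟨v, hvG, hv⟩ (hg u hu)

lemma SM_bot {l : Filter ℝ} (hl : EndF l) : SM l ⊥ := by
  intro P hP hP0
  refine ⟨Empty, inferInstance, Empty.elim, fun i => i.elim, ?_⟩
  filter_upwards [reg_ev hl P] with u hu v hv
  have h1 := zeros_card hP0 hu {v} (by simpa using hv)
  have h2 : P.coeff.support ⊆ {0} := by
    intro β hβ
    have := hP β (by simpa using hβ)
    simpa using this
  have := Finset.card_le_card h2
  simp at this h1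
  omega

lemma cov_all {l : Filter ℝ} (hl : EndF l) {P : GA} (hP : P ≠ 0) : Cov l P := by
  classical
  have H : ∀ s : Finset ℝ, SM l (AddSubmonoid.closure (s : Set ℝ)) := by
    intro s
    induction s using Finset.induction_on with
    | empty => rw [Finset.coe_empty, AddSubmonoid.closure_empty]; exact SM_bot hl
    | insert a s _ ih =>
      rw [Finset.coe_insert, Set.insert_eq, AddSubmonoid.closure_union, sup_comm]
      exact SM_step hl ih
  exact H P.coeff.support P (fun β hβ => AddSubmonoid.subset_closure (by simpa using hβ)) hP

def Good {N : ℕ} (P : Fin N → GA) (I : Set ℝ) : Prop :=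
  ∃ (ι : Type) (ξ : ι → ℝ → ℝ),
    (∀ i, ContinuousOn (ξ i) I ∧ (MonotoneOn (ξ i) I ∨ AntitoneOn (ξ i) I)) ∧
    (∀ i j, (∀ u ∈ I, ξ i u < ξ j u) ∨ (∀ u ∈ I, ξ i u = ξ j u) ∨ (∀ u ∈ I, ξ j u < ξ i u)) ∧
    (∀ n i, (∀ u ∈ I, ev u (ξ i u) (P n) = 0) ∨ (∀ u ∈ I, ev u (ξ i u) (P n) ≠ 0)) ∧
    (∀ u ∈ I, ∀ v n, ev u v (P n) = 0 → ∃ i, v = ξ i u) ∧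
    (∀ n, ∀ u ∈ I, Reg (P n) u) ∧
    (∀ i, ∃ (f : GA) (𝒢 : Finset GA), ∀ u ∈ I, ∀ v,
      v = ξ i u ↔ ev u v f = 0 ∧ ∀ g ∈ 𝒢, 0 < ev u v g)

lemma Good.mono {N : ℕ} {P : Fin N → GA} {I J : Set ℝ} (hIJ : I ⊆ J) (h : Good P J) :
    Good P I := by
  obtain ⟨ι, ξ, h1, h2, h3, h4, h5, h6⟩ := h
  refine ⟨ι, ξ, fun i => ⟨(h1 i).1.mono hIJ, ?_⟩, fun i j => ?_, fun n i => ?_,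
    fun u hu => h4 u (hIJ hu), fun n u hu => h5 n u (hIJ hu), fun i => ?_⟩
  · exact (h1 i).2.imp (fun h => h.mono hIJ) (fun h => h.mono hIJ)
  · rcases h2 i j with h | h | h
    · exact Or.inl fun u hu => h u (hIJ hu)
    · exact Or.inr (Or.inl fun u hu => h u (hIJ hu))
    · exact Or.inr (Or.inr fun u hu => h u (hIJ hu))
  · exact (h3 n i).imp (fun h u hu => h u (hIJ hu)) (fun h u hu => h u (hIJ hu))
  · obtain ⟨f, 𝒢, h⟩ := h6 i
    exact ⟨f, 𝒢, fun u hu => h u (hIJ hu)⟩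

lemma sgn_neg_iff {x : ℝ} : SignType.sign x < 0 ↔ x < 0 := by
  rw [← not_le, sign_nonneg_iff, not_le]

lemma sgn_pos_iff {x : ℝ} : 0 < SignType.sign x ↔ 0 < x := by
  rw [← not_le, sign_nonpos_iff, not_le]

lemma good_local {N : ℕ} (P : Fin N → GA) (hP : ∀ n, P n ≠ 0) {l : Filter ℝ} (hl : EndF l) :
    ∃ I ∈ l, Good P I := by
  classical
  set Q : GA := ∏ n, P n with hQdef
  have hQ : Q ≠ 0 := Finset.prod_ne_zero_iff.mpr fun n _ => hP n
  have hQP : ∀ u v n, ev u v (P n) = 0 → ev u v Q = 0 := by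
    intro u v n h
    rw [hQdef, map_prod]
    exact Finset.prod_eq_zero (Finset.mem_univ n) h
  obtain ⟨ι₀, _, η₀, hη₀, hcov₀⟩ := cov_all hl hQ
  let ι := {i : ι₀ // ∀ᶠ u in l, ev u (η₀ i u) Q = 0}
  let η : ι → ℝ → ℝ := fun i => η₀ i
  have hη : ∀ i, Nice l (η i) := fun i => hη₀ i
  have hηQ : ∀ i, ∀ᶠ u in l, ev u (η i u) Q = 0 := fun i => i.2
  have hcov : ∀ᶠ u in l, ∀ v, ev u v Q = 0 → ∃ i, v = η i u := by
    have h1 : ∀ᶠ u in l, ∀ i : ι₀, (¬ ∀ᶠ u in l, ev u (η₀ i u) Q = 0) →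
        ev u (η₀ i u) Q ≠ 0 := by
      refine Filter.eventually_all.mpr fun i => ?_
      rcases ((hη₀ i).2 Q).dich with h | h
      · exact Eventually.of_forall fun u hn => absurd h hn
      · exact h.mono fun u hu _ => hu
    filter_upwards [hcov₀, h1] with u h1 h2 v hv
    obtain ⟨i, hi⟩ := h1 v hv
    by_cases h : ∀ᶠ u in l, ev u (η₀ i u) Q = 0
    · exact ⟨⟨i, h⟩, hi⟩
    · exact absurd (hi ▸ hv) (h2 i h)
  obtain ⟨𝒬, hthom⟩ := thom Q hQ
  have htri : ∀ i j, CS l (fun u => η i u - η j u) := fun i j =>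
    (hη i).tri hl (hη j) hQ (hηQ i) (hηQ j)
  choose σ hσ using htri
  choose D hD hDcs using fun i => (hη i).1
  choose κ hκ using hDcs
  choose ρ hρ using fun i => (hη i).2
  have hρ' : ∀ᶠ u in l, ∀ i, ∀ q ∈ 𝒬, SignType.sign (ev u (η i u) q) = ρ i q :=
    Filter.eventually_all.mpr fun i => (Finset.eventually_all (l := l) _).mpr fun q _ => hρ i q
  have hρP : ∀ᶠ u in l, ∀ i n, SignType.sign (ev u (η i u) (P n)) = ρ i (P n) :=
    Filter.eventually_all.mpr fun i => Filter.eventually_all.mpr fun n => hρ i (P n)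
  have hσ' : ∀ᶠ u in l, ∀ i j, SignType.sign (η i u - η j u) = σ i j :=
    Filter.eventually_all.mpr fun i => Filter.eventually_all.mpr fun j => hσ i j
  have hD' : ∀ᶠ u in l, ∀ i, HasDerivAt (η i) (D i u) u ∧ SignType.sign (D i u) = κ i :=
    Filter.eventually_all.mpr fun i => (hD i).and (hκ i)
  have hreg : ∀ᶠ u in l, ∀ n, Reg (P n) u := Filter.eventually_all.mpr fun n => reg_ev hl (P n)
  have hQ0 : ∀ᶠ u in l, ∀ i, ev u (η i u) Q = 0 := Filter.eventually_all.mpr hηQ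
  obtain ⟨I, hI, ho, hIc, -, h⟩ := hl.ev (hcov.and (hρ'.and (hρP.and (hσ'.and (hD'.and
    (hreg.and (hQ0.and (reg_ev hl Q))))))))
  choose g1 g2 g3 g4 g5 g6 g7 g8 using h
  refine ⟨I, hI, ι, η, fun i => ⟨?_, ?_⟩, fun i j => ?_, fun n i => ?_, ?_, ?_, fun i => ?_⟩
  · exact fun u hu => (g5 u hu i).1.continuousAt.continuousWithinAt
  · by_cases hk : 0 ≤ κ i
    · left
      refine mono_of_deriv ho hIc (fun u hu => (g5 u hu i).1) fun u hu => ?_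
      rw [← sign_nonneg_iff, (g5 u hu i).2]; exact hk
    · right
      refine anti_of_deriv ho hIc (fun u hu => (g5 u hu i).1) fun u hu => ?_
      rw [← sign_nonpos_iff, (g5 u hu i).2]; exact (not_le.mp hk).le
  · rcases lt_trichotomy (σ i j) 0 with hk | hk | hk
    · left
      intro u hu
      rw [← g4 u hu i j, sgn_neg_iff] at hk
      linarith
    · right; left
      intro u hu
      rw [← g4 u hu i j, sign_eq_zero_iff] at hk
      linarith
    · right; right
      intro u hu
      rw [← g4 u hu i j, sgn_pos_iff] at hk
      linarith
  · by_cases hk : ρ i (P n) = 0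
    · left
      intro u hu
      rw [← g3 u hu i n, sign_eq_zero_iff] at hk
      exact hk
    · right
      intro u hu he
      rw [← g3 u hu i n, sign_eq_zero_iff] at hk
      exact hk he
  · exact fun u hu v n hv => g1 u hu v (hQP u v n hv)
  · exact fun n u hu => g6 u hu n
  · refine ⟨Q ^ 2 + ∑ q ∈ 𝒬 with ρ i q = 0, q ^ 2,
      (𝒬.filter fun q => 0 < ρ i q) ∪ (𝒬.filter fun q => ρ i q < 0).image (fun q => -q), ?_⟩
    intro u hu v
    have e : ev u v (Q ^ 2 + ∑ q ∈ 𝒬 with ρ i q = 0, q ^ 2) =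
        ev u v Q ^ 2 + ∑ q ∈ 𝒬 with ρ i q = 0, ev u v q ^ 2 := by simp
    rw [e]
    constructor
    · rintro rfl
      constructor
      · rw [g7 u hu i]
        rw [Finset.sum_eq_zero]
        · simp
        · intro q hq
          rw [Finset.mem_filter] at hq
          have := g2 u hu i q hq.1
          rw [hq.2, sign_eq_zero_iff] at this
          rw [this]; simp
      · intro g hg
        rw [Finset.mem_union, Finset.mem_image] at hg
        rcases hg with hg | ⟨q, hq, rfl⟩
        · rw [Finset.mem_filter] at hg
          have := hg.2
          rw [← g2 u hu i g hg.1, sgn_pos_iff] at this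
          exact this
        · rw [Finset.mem_filter] at hq
          have := hq.2
          rw [← g2 u hu i q hq.1, sgn_neg_iff] at this
          rw [map_neg]; linarith
    · rintro ⟨h1, h2⟩
      have hnn : 0 ≤ ∑ q ∈ 𝒬 with ρ i q = 0, ev u v q ^ 2 :=
        Finset.sum_nonneg fun q _ => sq_nonneg _
      have hQv : ev u v Q = 0 := by
        have : ev u v Q ^ 2 = 0 := by nlinarith [sq_nonneg (ev u v Q)]
        exact pow_eq_zero_iff (two_ne_zero) |>.mp this
      have hz : ∑ q ∈ 𝒬 with ρ i q = 0, ev u v q ^ 2 = 0 := by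
        rw [hQv] at h1; simpa using h1
      rw [Finset.sum_eq_zero_iff_of_nonneg (fun q _ => sq_nonneg _)] at hz
      refine hthom u (g8 u hu) v (η i u) hQv (g7 u hu i) fun q hq => ?_
      rw [g2 u hu i q hq]
      rcases lt_trichotomy (ρ i q) 0 with hk | hk | hk
      · have := h2 (-q) (by
          rw [Finset.mem_union, Finset.mem_image]
          exact Or.inr ⟨q, Finset.mem_filter.mpr ⟨hq, hk⟩, rfl⟩)
        rw [map_neg] at this
        rw [sign_neg (by linarith)]
        revert hk; generalize ρ i q = r; revert r; decide
      · have := hz q (Finset.mem_filter.mpr ⟨hq, hk⟩)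
        rw [pow_eq_zero_iff two_ne_zero] at this
        rw [this, hk, sign_zero]
      · have := h2 q (by
          rw [Finset.mem_union]
          exact Or.inl (Finset.mem_filter.mpr ⟨hq, hk⟩))
        rw [sign_pos this]
        revert hk; generalize ρ i q = r; revert r; decide

lemma EndF_atTop : EndF atTop where
  neBot := inferInstance
  basis s hs := by
    obtain ⟨a, ha⟩ := mem_atTop_sets.mp hs
    exact ⟨Ioi a, Ioi_mem_atTop a, fun u hu => ha u (le_of_lt hu), isOpen_Ioi, ordConnected_Ioi⟩
  side z := Or.inr (Ioi_mem_atTop z)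

lemma EndF_atBot : EndF atBot where
  neBot := inferInstance
  basis s hs := by
    obtain ⟨a, ha⟩ := mem_atBot_sets.mp hs
    exact ⟨Iio a, Iio_mem_atBot a, fun u hu => ha u (le_of_lt hu), isOpen_Iio, ordConnected_Iio⟩
  side z := Or.inl (Iio_mem_atBot z)

lemma EndF_right (t : ℝ) : EndF (𝓝[>] t) where
  neBot := inferInstance
  basis s hs := by
    obtain ⟨a, ha, h⟩ := mem_nhdsGT_iff_exists_Ioo_subset.mp hs
    exact ⟨Ioo t a, Ioo_mem_nhdsGT ha, h, isOpen_Ioo, ordConnected_Ioo⟩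
  side z := by
    rcases lt_or_ge t z with h | h
    · exact Or.inl (mem_nhdsWithin_of_mem_nhds (Iio_mem_nhds h))
    · exact Or.inr (mem_of_superset self_mem_nhdsWithin fun u hu => lt_of_le_of_lt h hu)

lemma EndF_left (t : ℝ) : EndF (𝓝[<] t) where
  neBot := inferInstance
  basis s hs := by
    obtain ⟨a, ha, h⟩ := mem_nhdsLT_iff_exists_Ioo_subset.mp hs
    exact ⟨Ioo a t, Ioo_mem_nhdsLT ha, h, isOpen_Ioo, ordConnected_Ioo⟩
  side z := by
    rcases lt_or_ge z t with h | h
    · exact Or.inr (mem_nhdsWithin_of_mem_nhds (Ioi_mem_nhds h))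
    · exact Or.inl (mem_of_superset self_mem_nhdsWithin fun u hu => lt_of_lt_of_le hu h)

lemma oc_Ioi {I : Set ℝ} (hI : OrdConnected I) {e u : ℝ} (he : e ∉ I) (hu : u ∈ I) (h : e < u) :
    I ⊆ Ioi e := by
  intro w hw
  by_contra hn
  exact he (hI.out hw hu ⟨not_lt.mp hn, h.le⟩)

lemma oc_Iio {I : Set ℝ} (hI : OrdConnected I) {e u : ℝ} (he : e ∉ I) (hu : u ∈ I) (h : u < e) :
    I ⊆ Iio e := by
  intro w hw
  by_contra hn
  exact he (hI.out hu hw ⟨h.le, not_lt.mp hn⟩)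

lemma compactness (G : Set ℝ → Prop) (hmono : ∀ I J, I ⊆ J → G J → G I)
    (hloc : ∀ l, EndF l → ∃ I ∈ l, G I) :
    ∃ E : Finset ℝ, ∀ I : Set ℝ, OrdConnected I → (∀ e ∈ E, e ∉ I) → G I := by
  classical
  obtain ⟨I1, hI1, hG1⟩ := hloc _ EndF_atTop
  obtain ⟨d, hd⟩ := mem_atTop_sets.mp hI1
  obtain ⟨I2, hI2, hG2⟩ := hloc _ EndF_atBot
  obtain ⟨c, hc⟩ := mem_atBot_sets.mp hI2
  have hr : ∀ t : ℝ, ∃ r > t, G (Ioo t r) := by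
    intro t
    obtain ⟨J, hJ, hG⟩ := hloc _ (EndF_right t)
    obtain ⟨a, ha, h⟩ := mem_nhdsGT_iff_exists_Ioo_subset.mp hJ
    exact ⟨a, ha, hmono _ _ h hG⟩
  have hll : ∀ t : ℝ, ∃ r < t, G (Ioo r t) := by
    intro t
    obtain ⟨J, hJ, hG⟩ := hloc _ (EndF_left t)
    obtain ⟨a, ha, h⟩ := mem_nhdsLT_iff_exists_Ioo_subset.mp hJ
    exact ⟨a, ha, hmono _ _ h hG⟩
  choose r hr hrG using hr
  choose k hk hkG using hll
  obtain ⟨T, -, hT⟩ := (isCompact_Icc (a := c) (b := d)).elim_nhds_subcover (fun t => Ioo (k t) (r t))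
    (fun t _ => Ioo_mem_nhds (hk t) (hr t))
  refine ⟨{c, d} ∪ T ∪ T.image k ∪ T.image r, fun I hI hE => ?_⟩
  rcases I.eq_empty_or_nonempty with rfl | ⟨u, hu⟩
  · exact hmono _ _ (empty_subset _) hG1
  rcases lt_or_ge u c with h1 | h1
  · refine hmono _ _ (fun w hw => hc w ?_) hG2
    exact le_of_lt (oc_Iio hI (hE c (by simp)) hu h1 hw)
  rcases lt_or_ge d u with h2 | h2
  · refine hmono _ _ (fun w hw => hd w ?_) hG1
    exact le_of_lt (oc_Ioi hI (hE d (by simp)) hu h2 hw)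
  have := hT ⟨h1, h2⟩
  simp only [mem_iUnion] at this
  obtain ⟨t, ht, h3⟩ := this
  have et := hE t (by simp [ht])
  have ek := hE (k t) (by
    simp only [Finset.mem_union, Finset.mem_image]
    exact Or.inl (Or.inr ⟨t, ht, rfl⟩))
  have er := hE (r t) (by
    simp only [Finset.mem_union, Finset.mem_image]
    exact Or.inr ⟨t, ht, rfl⟩)
  rcases lt_trichotomy u t with h4 | h4 | h4
  · exact hmono _ (Ioo (k t) t) (fun w hw => ⟨oc_Ioi hI ek hu h3.1 hw, oc_Iio hI et hu h4 hw⟩) (hkG t)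
  · exact absurd (h4 ▸ hu) et
  · exact hmono _ (Ioo t (r t)) (fun w hw => ⟨oc_Ioi hI et hu h4 hw, oc_Iio hI er hu h3.2 hw⟩) (hrG t)

lemma conv_poly {K : ℕ} (hK : 0 < K) (β : Fin K → ℝ) (hβ : StrictMono β) (aa : Fin K → ℝ → ℝ)
    (haa : ∀ i, IsGenPoly1 (aa i)) (hnz : ∀ i, ∃ x : ℝ, 0 < x ∧ aa i x ≠ 0) :
    ∃ P : GA, P ≠ 0 ∧ P.coeff.support.card ≤ K ∧
      ∀ u v, ev u v P = ∑ i, aa i (Real.exp u) * Real.exp v ^ β i := by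
  classical
  have hb : ∀ i, ∃ b : GB, ∀ u, evB u b = aa i (Real.exp u) := by
    intro i
    obtain ⟨m, c, α, -, -, h⟩ := haa i
    refine ⟨∑ j, AddMonoidAlgebra.single (α j) (c j), fun u => ?_⟩
    rw [h _ (Real.exp_pos u), map_sum]
    refine Finset.sum_congr rfl fun j _ => ?_
    rw [evB_single, ← Real.exp_mul, mul_comm u]
  choose b hb using hb
  have hb0 : ∀ i, b i ≠ 0 := by
    intro i h0
    obtain ⟨x, hx, hne⟩ := hnz i
    apply hne
    rw [← Real.exp_log hx, ← hb, h0, map_zero]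
  set P : GA := ∑ i, AddMonoidAlgebra.single (β i) (b i) with hPdef
  have hco : ∀ t, P.coeff t = ∑ i, if β i = t then b i else 0 := by
    intro t
    simp only [hPdef, AddMonoidAlgebra.coeff_sum, AddMonoidAlgebra.coeff_single,
      Finsupp.finsetSum_apply, Finsupp.single_apply]
  refine ⟨P, ?_, ?_, ?_⟩
  · intro h0
    have := hco (β ⟨0, hK⟩)
    rw [h0, Finset.sum_eq_single ⟨0, hK⟩] at this
    · simp at this
      exact hb0 _ this.symm
    · intro i _ hi
      rw [if_neg (fun h => hi (hβ.injective h))]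
    · simp
  · have : P.coeff.support ⊆ Finset.univ.image β := by
      intro t ht
      have h1 : P.coeff t ≠ 0 := by simpa using ht
      rw [hco] at h1
      obtain ⟨i, _, hi⟩ := Finset.exists_ne_zero_of_sum_ne_zero h1
      rw [Finset.mem_image]
      refine ⟨i, Finset.mem_univ i, ?_⟩
      by_contra hne
      rw [if_neg hne] at hi
      exact hi rfl
    refine (Finset.card_le_card this).trans (Finset.card_image_le.trans ?_)
    simp
  · intro u v
    rw [hPdef, map_sum]
    refine Finset.sum_congr rfl fun i _ => ?_
    rw [ev_single, hb, ← Real.exp_mul, mul_comm v]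

lemma genPoly_ev (P : GA) : IsGenPoly2 (fun x y => ev (Real.log x) (Real.log y) P) := by
  classical
  let T : Finset (Σ _ : ℝ, ℝ) := P.coeff.support.sigma (fun β => (P.coeff β).coeff.support)
  let e := T.equivFin.symm
  refine ⟨T.card, fun k => (P.coeff (e k).1.1).coeff (e k).1.2,
    fun k => ((e k).1.2, (e k).1.1), ?_, ?_, ?_⟩
  · intro k
    have := (e k).2
    simp only [T, Finset.mem_sigma] at this
    simpa using this.2
  · intro k k' h
    simp only [Prod.mk.injEq] at h
    apply e.injective
    apply Subtype.ext
    rcases h with ⟨h1, h2⟩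
    exact Sigma.ext h2 (heq_of_eq h1)
  · intro x y hx hy
    have h1 : ∑ k, (P.coeff (e k).1.1).coeff (e k).1.2 * x ^ (e k).1.2 * y ^ (e k).1.1
        = ∑ t ∈ T, (P.coeff t.1).coeff t.2 * x ^ t.2 * y ^ t.1 := by
      rw [← Finset.sum_coe_sort T]
      exact Fintype.sum_equiv e _ (fun t : T => (P.coeff t.1.1).coeff t.1.2 * x ^ t.1.2 * y ^ t.1.1)
        (fun k => rfl)
    change ev (Real.log x) (Real.log y) P = ∑ k, (P.coeff (e k).1.1).coeff (e k).1.2 * x ^ (e k).1.2 * y ^ (e k).1.1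
    rw [h1, Finset.sum_sigma, ev_eq_sum]
    refine Finset.sum_congr rfl fun β _ => ?_
    rw [evB_eq_sum, Finset.sum_mul]
    refine Finset.sum_congr rfl fun α _ => ?_
    rw [Real.rpow_def_of_pos hx, Real.rpow_def_of_pos hy, mul_comm α, mul_comm β]

lemma gsa_of (f : GA) (𝒢 : Finset GA) :
    IsGSA2 {q : ℝ × ℝ | 0 < q.1 ∧ 0 < q.2 ∧ ev (Real.log q.1) (Real.log q.2) f = 0 ∧
      ∀ g ∈ 𝒢, 0 < ev (Real.log q.1) (Real.log q.2) g} := by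
  refine ⟨1, fun _ => {q : ℝ × ℝ | 0 < q.1 ∧ 0 < q.2 ∧ ev (Real.log q.1) (Real.log q.2) f = 0 ∧
      ∀ g ∈ 𝒢, 0 < ev (Real.log q.1) (Real.log q.2) g}, fun _ => ?_, ?_⟩
  · refine ⟨fun x y => ev (Real.log x) (Real.log y) f, 𝒢.card,
      fun k x y => ev (Real.log x) (Real.log y) (𝒢.equivFin.symm k).1,
      genPoly_ev f, fun k => genPoly_ev _, ?_⟩
    ext q
    simp only [mem_ofPred_eq]
    refine and_congr_right fun _ => and_congr_right fun _ => and_congr_right fun _ => ?_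
    constructor
    · intro h k
      exact h _ (𝒢.equivFin.symm k).2
    · intro h g hg
      have := h (𝒢.equivFin ⟨g, hg⟩)
      simpa using this
  · exact (iUnion_const _).symm

lemma vstrip_poly (γ : ℕ → ℝ) (L p : ℕ) :
    ∃ 𝒱 : Finset GA, ∀ u v, Real.exp u ∈ vstrip γ L p ↔ ∀ g ∈ 𝒱, 0 < ev u v g := by
  classical
  have key : ∀ c : ℝ, ∃ A : GA, ∀ u v, ev u v A = Real.exp u - c := by
    intro c
    refine ⟨AddMonoidAlgebra.single 0
      (AddMonoidAlgebra.single 1 1 - AddMonoidAlgebra.single 0 c), fun u v => ?_⟩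
    rw [ev_single, map_sub, evB_single, evB_single]; simp
  obtain ⟨A, hA⟩ := key (γ p)
  obtain ⟨B, hB⟩ := key (γ (p + 1))
  by_cases h : p = L
  · refine ⟨{A}, fun u v => ?_⟩
    simp [vstrip, h, hA]
  · refine ⟨{A, -B}, fun u v => ?_⟩
    simp [vstrip, h, hA, hB]

lemma strip_data {N : ℕ} {P : Fin N → GA} (hP : ∀ n, P n ≠ 0) {I : Set ℝ} (hI : I.Nonempty)
    (hG : Good P I) :
    ∃ (s : Fin N → ℕ) (ζ : Fin N → ℕ → ℝ → ℝ),
      (∀ n, s n ≤ (P n).coeff.support.card) ∧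
      (∀ n j, 1 ≤ j → j ≤ s n → ContinuousOn (ζ n j) I ∧
        (MonotoneOn (ζ n j) I ∨ AntitoneOn (ζ n j) I) ∧
        ∃ (f : GA) (𝒢 : Finset GA), ∀ u ∈ I, ∀ v,
          v = ζ n j u ↔ ev u v f = 0 ∧ ∀ g ∈ 𝒢, 0 < ev u v g) ∧
      (∀ n j j', 1 ≤ j → j < j' → j' ≤ s n → ∀ u ∈ I, ζ n j u < ζ n j' u) ∧
      (∀ n, ∀ u ∈ I, ∀ v, ev u v (P n) = 0 ↔ ∃ j, 1 ≤ j ∧ j ≤ s n ∧ v = ζ n j u) ∧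
      (∀ n₁ n₂ j₁ j₂, 1 ≤ j₁ → j₁ ≤ s n₁ → 1 ≤ j₂ → j₂ ≤ s n₂ →
        (∀ u ∈ I, ζ n₁ j₁ u < ζ n₂ j₂ u) ∨ (∀ u ∈ I, ζ n₁ j₁ u = ζ n₂ j₂ u) ∨
        (∀ u ∈ I, ζ n₂ j₂ u < ζ n₁ j₁ u)) := by
  classical
  obtain ⟨ι, ξ, h1, h2, h3, h4, h5, h6⟩ := hG
  obtain ⟨a, ha⟩ := hI
  let Z : Fin N → Finset ℝ := fun n => (zeros_finite (hP n) (h5 n a ha)).toFinset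
  have hZ : ∀ n v, v ∈ Z n ↔ ev a v (P n) = 0 := by intro n v; simp [Z]
  have hex : ∀ n, ∀ k : Fin (Z n).card, ∃ i, ξ i a = (Z n).orderEmbOfFin rfl k := by
    intro n k
    have := (hZ n _).mp ((Z n).orderEmbOfFin_mem rfl k)
    obtain ⟨i, hi⟩ := h4 a ha _ n this
    exact ⟨i, hi.symm⟩
  choose idx hidx using hex
  let ζ : Fin N → ℕ → ℝ → ℝ := fun n j =>
    if h : 1 ≤ j ∧ j ≤ (Z n).card then ξ (idx n ⟨j - 1, by omega⟩) else 0
  have hζ : ∀ n j (h : 1 ≤ j ∧ j ≤ (Z n).card), ζ n j = ξ (idx n ⟨j - 1, by omega⟩) := by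
    intro n j h
    simp only [ζ]
    rw [dif_pos h]
  have hlt : ∀ i j, ξ i a < ξ j a → ∀ u ∈ I, ξ i u < ξ j u := by
    intro i j hij
    rcases h2 i j with h | h | h
    · exact h
    · exact absurd (h a ha) hij.ne
    · exact absurd (h a ha) hij.not_gt
  have heq : ∀ i j, ξ i a = ξ j a → ∀ u ∈ I, ξ i u = ξ j u := by
    intro i j hij
    rcases h2 i j with h | h | h
    · exact absurd hij (h a ha).ne
    · exact h
    · exact absurd hij (h a ha).ne'
  refine ⟨fun n => (Z n).card, ζ, ?_, ?_, ?_, ?_, ?_⟩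
  · intro n
    exact (zeros_card (hP n) (h5 n a ha) (Z n) (fun z hz => (hZ n z).mp hz)).le
  · intro n j hj1 hj2
    rw [hζ n j ⟨hj1, hj2⟩]
    exact ⟨(h1 _).1, (h1 _).2, h6 _⟩
  · intro n j j' hj hjj hj' u hu
    simp only at hj'
    rw [hζ n j ⟨hj, by omega⟩, hζ n j' ⟨by omega, hj'⟩]
    refine hlt _ _ ?_ u hu
    rw [hidx, hidx]
    refine ((Z n).orderEmbOfFin rfl).strictMono ?_
    rw [Fin.mk_lt_mk]
    omega
  · intro n u hu v
    constructor
    · intro h0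
      obtain ⟨i, rfl⟩ := h4 u hu v n h0
      have hz : ∀ u ∈ I, ev u (ξ i u) (P n) = 0 := (h3 n i).resolve_right fun h => h u hu h0
      have hm : ξ i a ∈ Z n := (hZ n _).mpr (hz a ha)
      have : ξ i a ∈ Set.range ((Z n).orderEmbOfFin rfl) := by
        rw [Finset.range_orderEmbOfFin]; exact hm
      obtain ⟨k, hk⟩ := this
      have hk2 := k.2
      refine ⟨k + 1, by omega, by simp only; omega, ?_⟩
      rw [hζ n (k + 1) ⟨by omega, by omega⟩]
      refine heq _ _ ?_ u hu
      rw [hidx, ← hk]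
      congr 1
    · rintro ⟨j, hj1, hj2, rfl⟩
      rw [hζ n j ⟨hj1, hj2⟩]
      refine (h3 n _).resolve_right (fun h => h a ha ?_) u hu
      rw [hidx]
      exact (hZ n _).mp ((Z n).orderEmbOfFin_mem rfl _)
  · intro n₁ n₂ j₁ j₂ a1 a2 a3 a4
    rw [hζ n₁ j₁ ⟨a1, a2⟩, hζ n₂ j₂ ⟨a3, a4⟩]
    exact h2 _ _

lemma strips (E : Finset ℝ) : ∃ γ : ℕ → ℝ, γ 0 = 0 ∧ StrictMonoOn γ (Set.Iic E.card) ∧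
    ∀ p ≤ E.card, (vstrip γ E.card p).Nonempty ∧ (∀ x ∈ vstrip γ E.card p, 0 < x) ∧
      OrdConnected (Real.exp ⁻¹' (vstrip γ E.card p)) ∧
      ∀ e ∈ E, e ∉ Real.exp ⁻¹' (vstrip γ E.card p) := by
  let γ : ℕ → ℝ := fun k => match k with
    | 0 => 0
    | k + 1 => if h : k < E.card then Real.exp (E.orderEmbOfFin rfl ⟨k, h⟩) else 0
  have hγs : ∀ k (h : k < E.card), γ (k + 1) = Real.exp (E.orderEmbOfFin rfl ⟨k, h⟩) := by
    intro k h
    simp only [γ]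
    rw [dif_pos h]
  have hmono : StrictMonoOn γ (Set.Iic E.card) := by
    intro x hx y hy hxy
    simp only [Set.mem_Iic] at hx hy
    obtain ⟨y, rfl⟩ : ∃ k, y = k + 1 := ⟨y - 1, by omega⟩
    rw [hγs y (by omega)]
    rcases x with _ | x
    · exact Real.exp_pos _
    · rw [hγs x (by omega), Real.exp_lt_exp]
      refine (E.orderEmbOfFin rfl).strictMono ?_
      rw [Fin.mk_lt_mk]
      omega
  refine ⟨γ, rfl, hmono, fun p hp => ?_⟩
  have hnn : 0 ≤ γ p := hmono.monotoneOn (Set.mem_Iic.mpr (Nat.zero_le _)) (Set.mem_Iic.mpr hp)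
    (Nat.zero_le p)
  have hoc : OrdConnected (vstrip γ E.card p) := by
    unfold vstrip
    split_ifs
    · exact ordConnected_Ioi
    · exact ordConnected_Ioo
  have hlow : ∀ x ∈ vstrip γ E.card p, γ p < x := by
    unfold vstrip
    split_ifs
    · exact fun x hx => hx
    · exact fun x hx => hx.1
  refine ⟨?_, fun x hx => lt_of_le_of_lt hnn (hlow x hx), ?_, ?_⟩
  · unfold vstrip
    split_ifs with h
    · exact nonempty_Ioi
    · rw [nonempty_Ioo]
      exact hmono (Set.mem_Iic.mpr hp) (Set.mem_Iic.mpr (show p + 1 ≤ E.card by omega)) (Nat.lt_succ_self p)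
  · exact hoc.preimage_mono Real.exp_monotone
  · intro e he hmem
    have : e ∈ Set.range (E.orderEmbOfFin rfl) := by
      rw [Finset.range_orderEmbOfFin]; exact he
    obtain ⟨k, rfl⟩ := this
    have hk := k.2
    have h1 := hlow _ hmem
    have hg := hγs k hk
    rw [← hg] at h1
    have hpk : p < k + 1 := by
      by_contra hn
      have := hmono.monotoneOn (Set.mem_Iic.mpr (show (k : ℕ) + 1 ≤ E.card by omega))
        (Set.mem_Iic.mpr hp) (not_lt.mp hn)
      linarith
    change Real.exp _ ∈ vstrip γ E.card p at hmem
    rw [← hg] at hmem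
    unfold vstrip at hmem
    rw [if_neg (by omega)] at hmem
    have := hmono.monotoneOn (Set.mem_Iic.mpr (show p + 1 ≤ E.card by omega))
        (Set.mem_Iic.mpr (show (k : ℕ) + 1 ≤ E.card by omega)) (show p + 1 ≤ (k : ℕ) + 1 by omega)
    exact absurd hmem.2 (not_lt.mpr this)

/-- Projection lemma: for a finite family of nonzero generalized polynomial
functions `a n` (given with their unique representations
`a n x y = ∑_{i} aa n i x · y ^ β n i` with `K n` distinct `y`-exponents), there
is a finite subdivision `0 = γ 0 < … < γ L ( < γ (L+1) = ∞)` of the `x`-axis such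
that on each vertical half-strip `H p = (γ p, γ (p+1)) × (0,∞)` the zero set of
each `a n` is the disjoint union of the graphs of `s n p ≤ K n` continuous,
monotonic, generalized semialgebraic functions `0 < ξ n p 1 < … < ξ n p (s n p)`,
and any two such functions satisfy a uniform trichotomy on the strip. -/
theorem projection_lemma (N : ℕ) (a : Fin N → ℝ → ℝ → ℝ)
    (K : Fin N → ℕ) (hK : ∀ n, 0 < K n)
    (β : (n : Fin N) → Fin (K n) → ℝ) (hβ : ∀ n, StrictMono (β n))
    (aa : (n : Fin N) → Fin (K n) → ℝ → ℝ)
    (haa : ∀ n i, IsGenPoly1 (aa n i))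
    (haanz : ∀ n i, ∃ x : ℝ, 0 < x ∧ aa n i x ≠ 0)
    (ha : ∀ n, ∀ x y : ℝ, 0 < x → 0 < y → a n x y = ∑ i, aa n i x * y ^ β n i) :
    ∃ (L : ℕ) (γ : ℕ → ℝ), γ 0 = 0 ∧ StrictMonoOn γ (Set.Iic L) ∧
      ∃ (s : Fin N → ℕ → ℕ) (ξ : Fin N → ℕ → ℕ → ℝ → ℝ),
        (∀ n, ∀ p ≤ L, s n p ≤ K n) ∧
        (∀ n, ∀ p ≤ L, ∀ j, 1 ≤ j → j ≤ s n p →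
          ContinuousOn (ξ n p j) (vstrip γ L p) ∧
          (MonotoneOn (ξ n p j) (vstrip γ L p) ∨
            AntitoneOn (ξ n p j) (vstrip γ L p)) ∧
          IsGSA2 {q : ℝ × ℝ | q.1 ∈ vstrip γ L p ∧ q.2 = ξ n p j q.1}) ∧
        (∀ n, ∀ p ≤ L, ∀ j, 1 ≤ j → j ≤ s n p →
          ∀ x ∈ vstrip γ L p, 0 < ξ n p j x) ∧
        (∀ n, ∀ p ≤ L, ∀ j j', 1 ≤ j → j < j' → j' ≤ s n p →
          ∀ x ∈ vstrip γ L p, ξ n p j x < ξ n p j' x) ∧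
        (∀ n, ∀ p ≤ L, ∀ x ∈ vstrip γ L p, ∀ y : ℝ, 0 < y →
          (a n x y = 0 ↔ ∃ j, 1 ≤ j ∧ j ≤ s n p ∧ y = ξ n p j x)) ∧
        (∀ n₁ n₂, ∀ p ≤ L, ∀ j₁ j₂, 1 ≤ j₁ → j₁ ≤ s n₁ p → 1 ≤ j₂ → j₂ ≤ s n₂ p →
          (∀ x ∈ vstrip γ L p, ξ n₁ p j₁ x < ξ n₂ p j₂ x) ∨
          (∀ x ∈ vstrip γ L p, ξ n₁ p j₁ x = ξ n₂ p j₂ x) ∨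
          (∀ x ∈ vstrip γ L p, ξ n₂ p j₂ x < ξ n₁ p j₁ x)) := by
  classical
  have hc := fun n => conv_poly (hK n) (β n) (hβ n) (aa n) (haa n) (haanz n)
  choose P hP0 hPc hPe using hc
  obtain ⟨E, hE⟩ := compactness (Good P) (fun I J h => Good.mono h)
    (fun l hl => good_local P hP0 hl)
  obtain ⟨γ, hγ0, hγm, hst⟩ := strips E
  have hdat := fun (p : ℕ) (hp : p ≤ E.card) => strip_data (I := Real.exp ⁻¹' (vstrip γ E.card p)) hP0
    (by
      obtain ⟨⟨x, hx⟩, hpos, -⟩ := hst p hp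
      refine ⟨Real.log x, ?_⟩
      rw [Set.mem_preimage, Real.exp_log (hpos x hx)]
      exact hx)
    (hE _ (hst p hp).2.2.1 (hst p hp).2.2.2)
  choose! s ζ d1 d2 d3 d4 d5 using hdat
  have hpos : ∀ p ≤ E.card, ∀ x ∈ vstrip γ E.card p, 0 < x := fun p hp => (hst p hp).2.1
  have hlog : ∀ p ≤ E.card, ∀ x ∈ vstrip γ E.card p,
      Real.log x ∈ Real.exp ⁻¹' (vstrip γ E.card p) := by
    intro p hp x hx
    rw [Set.mem_preimage, Real.exp_log (hpos p hp x hx)]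
    exact hx
  refine ⟨E.card, γ, hγ0, hγm, fun n p => s p n,
    fun n p j x => Real.exp (ζ p n j (Real.log x)), ?_, ?_, ?_, ?_, ?_, ?_⟩
  · intro n p hp
    exact (d1 p hp n).trans (hPc n)
  · intro n p hp j hj1 hj2
    obtain ⟨c1, c2, f, 𝒢, c3⟩ := d2 p hp n j hj1 hj2
    refine ⟨?_, ?_, ?_⟩
    · refine Real.continuous_exp.comp_continuousOn (c1.comp ?_ (hlog p hp))
      exact Real.continuousOn_log.mono fun x hx => (hpos p hp x hx).ne'
    · refine c2.imp (fun h => ?_) (fun h => ?_)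
      · intro x hx y hy hxy
        exact Real.exp_le_exp.mpr (h (hlog p hp x hx) (hlog p hp y hy)
          (Real.log_le_log (hpos p hp x hx) hxy))
      · intro x hx y hy hxy
        exact Real.exp_le_exp.mpr (h (hlog p hp x hx) (hlog p hp y hy)
          (Real.log_le_log (hpos p hp x hx) hxy))
    · obtain ⟨𝒱, hV⟩ := vstrip_poly γ E.card p
      convert gsa_of f (𝒢 ∪ 𝒱) using 1
      ext ⟨x, y⟩
      simp only [mem_ofPred_eq]
      constructor
      · rintro ⟨hx, rfl⟩
        have h1 := (c3 _ (hlog p hp x hx) (Real.log (Real.exp (ζ p n j (Real.log x))))).mp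
          (Real.log_exp _)
        refine ⟨hpos p hp x hx, Real.exp_pos _, h1.1, fun g hg => ?_⟩
        rcases Finset.mem_union.mp hg with hg | hg
        · exact h1.2 g hg
        · exact (hV _ _).mp (hlog p hp x hx) g hg
      · rintro ⟨hx, hy, hf, hg⟩
        have hm := (hV (Real.log x) (Real.log y)).mpr
          (fun g h => hg g (Finset.mem_union_right _ h))
        have h1 := (c3 (Real.log x) hm (Real.log y)).mpr
          ⟨hf, fun g h => hg g (Finset.mem_union_left _ h)⟩
        rw [Real.exp_log hx] at hm
        refine ⟨hm, ?_⟩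
        rw [← h1, Real.exp_log hy]
  · intro n p hp j _ _ x _
    exact Real.exp_pos _
  · intro n p hp j j' h1 h2 h3 x hx
    exact Real.exp_lt_exp.mpr (d3 p hp n j j' h1 h2 h3 _ (hlog p hp x hx))
  · intro n p hp x hx y hy
    have h := d4 p hp n _ (hlog p hp x hx) (Real.log y)
    rw [hPe, Real.exp_log hy, Real.exp_log (hpos p hp x hx), ← ha n x y (hpos p hp x hx) hy] at h
    rw [h]
    refine exists_congr fun j => and_congr_right fun _ => and_congr_right fun _ => ?_
    constructor
    · intro h
      change y = Real.exp (ζ p n j (Real.log x))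
      rw [← h, Real.exp_log hy]
    · intro h
      rw [h, Real.log_exp]
  · intro n₁ n₂ p hp j₁ j₂ h1 h2 h3 h4
    rcases d5 p hp n₁ n₂ j₁ j₂ h1 h2 h3 h4 with h | h | h
    · exact Or.inl fun x hx => Real.exp_lt_exp.mpr (h _ (hlog p hp x hx))
    · exact Or.inr (Or.inl fun x hx => congrArg Real.exp (h _ (hlog p hp x hx)))
    · exact Or.inr (Or.inr fun x hx => Real.exp_lt_exp.mpr (h _ (hlog p hp x hx)))
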